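/- arXiv:2503.12477 — 3 statements merged into one kernel-verified Lean document; each statement's English description precedes it below -/
import Mathlib

section
/- Let S² be the unit sphere in three-dimensional Euclidean space and fix a point x₀ ∈ S². The continuous map Φ₀ : S² → Sym2 S² defined by Φ₀(x) = ⟦(x, x₀)⟧ is not homotopic to any constant map. -/
/-- The unit sphere `S²` in three-dimensional Euclidean space. -/
abbrev S2 : Type := Metric.sphere (0 : EuclideanSpace ℝ (Fin 3)) 1

/-!
Identify `S²` with `ℂP¹`, so that `x ∈ S²` is a line `L x` in `ℂ²`. An unordered pair `{x, y}` then
determines the line `L x ⊙ L y` of symmetric products in `ℂ² ⊗ ℂ²`, which gives a line bundle on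
`Sym2 S²` whose pullback along `Φ₀` is `x ↦ L x ⊙ L x₀ ≅ L x`. Line bundles are encoded by
continuous families of projection matrices. If `Q` is close to a projection `P`, then `1 - P + Q` is
invertible and `Q` is injective on the range of `P`, so a nowhere vanishing section can be
transported along a homotopy. If `Φ₀` were null-homotopic, `L` would therefore have a nowhere
vanishing section. Comparing this section over the two hemispheres would give a continuous logarithm
on the circle.
-/

open Matrix Topology ComplexConjugate
open scoped ComplexOrder

section Transport

variable {X T ι 𝕜 : Type*} [TopologicalSpace X] [TopologicalSpace T] [Fintype ι]
  [Field 𝕜]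

/-- The bundle over `X` whose fibre at `x` is the range of the idempotent matrix `P x` has a nowhere
vanishing continuous section. Being in the range of `P x` is encoded as being fixed by `P x`. -/
def HasNonvanishingSection [TopologicalSpace 𝕜] (P : X → Matrix ι ι 𝕜) : Prop :=
  ∃ s : X → ι → 𝕜, Continuous s ∧ ∀ x, s x ≠ 0 ∧ P x *ᵥ s x = s x

theorem mulVec_ne_zero_of_det_one_sub_add_ne_zero [DecidableEq ι] {P Q : Matrix ι ι 𝕜} {v : ι → 𝕜}
    (hdet : (1 - P + Q).det ≠ 0) (hv : v ≠ 0) (hPv : P *ᵥ v = v) : Q *ᵥ v ≠ 0 := by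
  intro hQv
  exact hv <| eq_zero_of_mulVec_eq_zero hdet <| by
    rw [add_mulVec, sub_mulVec, one_mulVec, hPv, hQv, sub_self, add_zero]

variable [TopologicalSpace 𝕜] [IsTopologicalRing 𝕜]

theorem HasNonvanishingSection.of_det_ne_zero [DecidableEq ι] {P Q : X → Matrix ι ι 𝕜}
    (hP : HasNonvanishingSection P) (hQ : Continuous Q) (hidem : ∀ x, IsIdempotentElem (Q x))
    (hdet : ∀ x, (1 - P x + Q x).det ≠ 0) : HasNonvanishingSection Q := by
  obtain ⟨s, hs, hsP⟩ := hP
  refine ⟨fun x ↦ Q x *ᵥ s x, hQ.matrix_mulVec hs, fun x ↦ ⟨?_, ?_⟩⟩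
  · exact mulVec_ne_zero_of_det_one_sub_add_ne_zero (hdet x) (hsP x).1 (hsP x).2
  · rw [mulVec_mulVec, (hidem x).eq]

variable [T1Space 𝕜] [CompactSpace X]

theorem eventually_forall_det_one_sub_add_ne_zero [DecidableEq ι] {P : T → X → Matrix ι ι 𝕜}
    (hP : Continuous fun p : T × X ↦ P p.1 p.2) (t₀ : T) :
    ∀ᶠ t in 𝓝 t₀, ∀ x, (1 - P t₀ x + P t x).det ≠ 0 ∧ (1 - P t x + P t₀ x).det ≠ 0 := by
  have hP₀ : Continuous fun p : T × X ↦ P t₀ p.2 :=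
    hP.comp (by fun_prop : Continuous fun p : T × X ↦ (t₀, p.2))
  have hopen : IsOpen {p : T × X | (1 - P t₀ p.2 + P p.1 p.2).det ≠ 0 ∧
      (1 - P p.1 p.2 + P t₀ p.2).det ≠ 0} :=
    (isOpen_compl_singleton.preimage ((continuous_const.sub hP₀).add hP).matrix_det).inter
      (isOpen_compl_singleton.preimage ((continuous_const.sub hP).add hP₀).matrix_det)
  have hnear := isCompact_univ.eventually_forall_of_forall_eventually (x₀ := t₀)
    (P := fun t x ↦ (1 - P t₀ x + P t x).det ≠ 0 ∧ (1 - P t x + P t₀ x).det ≠ 0)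
    fun x _ ↦ hopen.mem_nhds (by simp)
  simpa using hnear

theorem HasNonvanishingSection.transport [PreconnectedSpace T] {P : T → X → Matrix ι ι 𝕜}
    (hP : Continuous fun p : T × X ↦ P p.1 p.2) (hidem : ∀ t x, IsIdempotentElem (P t x))
    {t₀ : T} (h : HasNonvanishingSection (P t₀)) (t : T) : HasNonvanishingSection (P t) := by
  classical
  have hPt : ∀ t, Continuous (P t) := fun t ↦ hP.comp (by fun_prop : Continuous fun x ↦ (t, x))
  refine PreconnectedSpace.induction₂'
    (fun t t' ↦ HasNonvanishingSection (P t) → HasNonvanishingSection (P t'))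
    (fun t ↦ ?_) ⟨fun _ _ _ hab hbc ha ↦ hbc (hab ha)⟩ t₀ t h
  filter_upwards [eventually_forall_det_one_sub_add_ne_zero hP t] with t' ht'
  exact ⟨fun h ↦ h.of_det_ne_zero (hPt t') (hidem t') fun x ↦ (ht' x).1,
    fun h ↦ h.of_det_ne_zero (hPt t) (hidem t) fun x ↦ (ht' x).2⟩

end Transport

section LineProjection

variable {ι 𝕜 : Type*} [Fintype ι]

/-- The multiple of `M` of trace one; it is `0` if `M` has trace zero. -/
noncomputable def traceNormalize [Field 𝕜] (M : Matrix ι ι 𝕜) : Matrix ι ι 𝕜 :=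
  M.trace⁻¹ • M

theorem traceNormalize_smul [Field 𝕜] {c : 𝕜} (hc : c ≠ 0) (M : Matrix ι ι 𝕜) :
    traceNormalize (c • M) = traceNormalize M := by
  rw [traceNormalize, trace_smul, smul_eq_mul, smul_smul, mul_inv, mul_right_comm,
    inv_mul_cancel₀ hc, one_mul, traceNormalize]

variable [RCLike 𝕜] {v w : ι → 𝕜}

/-- The orthogonal projection of `𝕜^ι` onto the line spanned by `v`, as a matrix. -/
noncomputable def lineProj (v : ι → 𝕜) : Matrix ι ι 𝕜 :=
  traceNormalize (vecMulVec v (star v))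

theorem lineProj_eq_smul (v : ι → 𝕜) :
    lineProj v = (v ⬝ᵥ star v)⁻¹ • vecMulVec v (star v) := by
  rw [lineProj, traceNormalize, trace_vecMulVec]

theorem lineProj_mulVec (v w : ι → 𝕜) :
    lineProj v *ᵥ w = ((v ⬝ᵥ star v)⁻¹ * (star v ⬝ᵥ w)) • v := by
  rw [lineProj_eq_smul, smul_mulVec, vecMulVec_mulVec, op_smul_eq_smul, smul_smul]

theorem lineProj_mulVec_self (hv : v ≠ 0) : lineProj v *ᵥ v = v := by
  rw [lineProj_mulVec, dotProduct_comm (star v),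
    inv_mul_cancel₀ (dotProduct_self_star_eq_zero.not.mpr hv), one_smul]

theorem isIdempotentElem_lineProj (hv : v ≠ 0) : IsIdempotentElem (lineProj v) := by
  calc lineProj v * lineProj v
      = (v ⬝ᵥ star v)⁻¹ • vecMulVec (lineProj v *ᵥ v) (star v) := by
        rw [← mul_vecMulVec, ← mul_smul_comm, ← lineProj_eq_smul]
    _ = lineProj v := by rw [lineProj_mulVec_self hv, lineProj_eq_smul]

theorem exists_eq_smul_of_lineProj_mulVec_eq (h : lineProj v *ᵥ w = w) : ∃ c : 𝕜, w = c • v :=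
  ⟨_, h.symm.trans (lineProj_mulVec v w)⟩

end LineProjection

section SymmetricProduct

variable {ι 𝕜 : Type*}

/-- The symmetric product `u ⊙ w = u ⊗ w + w ⊗ u` of vectors, in coordinates. -/
def symmMul [CommRing 𝕜] : (ι → 𝕜) →ₗ[𝕜] (ι → 𝕜) →ₗ[𝕜] (ι × ι → 𝕜) :=
  LinearMap.mk₂ 𝕜 (fun u w p ↦ u p.1 * w p.2 + u p.2 * w p.1)
    (fun _ _ _ ↦ by ext; simp only [Pi.add_apply]; ring)
    (fun _ _ _ ↦ by ext; simp only [Pi.smul_apply, smul_eq_mul]; ring)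
    (fun _ _ _ ↦ by ext; simp only [Pi.add_apply]; ring)
    (fun _ _ _ ↦ by ext; simp only [Pi.smul_apply, smul_eq_mul]; ring)

theorem symmMul_apply [CommRing 𝕜] (u w : ι → 𝕜) (p : ι × ι) :
    symmMul u w p = u p.1 * w p.2 + u p.2 * w p.1 :=
  rfl

theorem symmMul_ne_zero [CommRing 𝕜] [IsDomain 𝕜] (h2 : (2 : 𝕜) ≠ 0) {u w : ι → 𝕜}
    (hu : u ≠ 0) (hw : w ≠ 0) : symmMul u w ≠ 0 := by
  intro h
  obtain ⟨i, hi⟩ := Function.ne_iff.mp hu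
  have hsymm (j : ι) : u i * w j + u j * w i = 0 := congrFun h (i, j)
  have hwi : w i = 0 := by
    have : 2 * (u i * w i) = 0 := by rw [two_mul, hsymm]
    exact ((mul_eq_zero.mp this).resolve_left h2 |> mul_eq_zero.mp).resolve_left hi
  exact hw <| funext fun j ↦ (mul_eq_zero.mp <| by simpa [hwi] using hsymm j).resolve_left hi

theorem exists_leftInverse_symmMul [Field 𝕜] (h2 : (2 : 𝕜) ≠ 0) {w : ι → 𝕜} (hw : w ≠ 0) :
    ∃ g : (ι × ι → 𝕜) →ₗ[𝕜] (ι → 𝕜), ∀ u, g (symmMul u w) = u := by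
  have hker : LinearMap.ker (symmMul.flip w) = ⊥ := by
    refine LinearMap.ker_eq_bot'.mpr fun u hu ↦ ?_
    by_contra hu0
    exact symmMul_ne_zero h2 hu0 hw hu
  obtain ⟨g, hg⟩ := LinearMap.exists_leftInverse_of_injective _ hker
  exact ⟨g, LinearMap.congr_fun hg⟩

/-- The symmetrized Kronecker product `(1 + τ) (A ⊗ B) (1 + τ)`, where `τ` swaps the two tensor
factors. It is the counterpart of `symmMul` for matrices. -/
def symmKronecker [CommRing 𝕜] (A B : Matrix ι ι 𝕜) : Matrix (ι × ι) (ι × ι) 𝕜 :=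
  of fun p q ↦ A p.1 q.1 * B p.2 q.2 + A p.1 q.2 * B p.2 q.1 +
    A p.2 q.1 * B p.1 q.2 + A p.2 q.2 * B p.1 q.1

theorem symmKronecker_apply [CommRing 𝕜] (A B : Matrix ι ι 𝕜) (p q : ι × ι) :
    symmKronecker A B p q = A p.1 q.1 * B p.2 q.2 + A p.1 q.2 * B p.2 q.1 +
      A p.2 q.1 * B p.1 q.2 + A p.2 q.2 * B p.1 q.1 :=
  rfl

theorem symmKronecker_comm [CommRing 𝕜] (A B : Matrix ι ι 𝕜) :
    symmKronecker A B = symmKronecker B A := by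
  ext p q
  simp only [symmKronecker_apply]
  ring

theorem symmKronecker_smul_vecMulVec [CommRing 𝕜] (a b : 𝕜) (u u' w w' : ι → 𝕜) :
    symmKronecker (a • vecMulVec u u') (b • vecMulVec w w') =
      (a * b) • vecMulVec (symmMul u w) (symmMul u' w') := by
  ext p q
  simp only [symmKronecker_apply, Matrix.smul_apply, vecMulVec_apply, symmMul_apply, smul_eq_mul]
  ring

theorem continuous_symmKronecker {X : Type*} [TopologicalSpace X] [CommRing 𝕜] [TopologicalSpace 𝕜]
    [IsTopologicalRing 𝕜] {A B : X → Matrix ι ι 𝕜} (hA : Continuous A) (hB : Continuous B) :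
    Continuous fun x ↦ symmKronecker (A x) (B x) :=
  continuous_matrix fun p q ↦ by
    simp only [symmKronecker_apply]
    fun_prop

variable [Fintype ι] [RCLike 𝕜]

theorem exists_symmKronecker_lineProj_eq_smul {u w : ι → 𝕜} (hu : u ≠ 0) (hw : w ≠ 0) :
    ∃ c : 𝕜, c ≠ 0 ∧ symmKronecker (lineProj u) (lineProj w) =
      c • vecMulVec (symmMul u w) (star (symmMul u w)) := by
  refine ⟨(u ⬝ᵥ star u)⁻¹ * (w ⬝ᵥ star w)⁻¹, ?_, ?_⟩
  · simp [hu, hw]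
  · have hstar : star (symmMul u w) = symmMul (star u) (star w) := by
      ext p
      simp [symmMul_apply]
    rw [lineProj_eq_smul, lineProj_eq_smul, symmKronecker_smul_vecMulVec, hstar]

theorem traceNormalize_symmKronecker_lineProj {u w : ι → 𝕜} (hu : u ≠ 0) (hw : w ≠ 0) :
    traceNormalize (symmKronecker (lineProj u) (lineProj w)) = lineProj (symmMul u w) := by
  obtain ⟨c, hc, h⟩ := exists_symmKronecker_lineProj_eq_smul hu hw
  rw [h, traceNormalize_smul hc, lineProj]

theorem trace_symmKronecker_lineProj_ne_zero {u w : ι → 𝕜} (hu : u ≠ 0) (hw : w ≠ 0) :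
    (symmKronecker (lineProj u) (lineProj w)).trace ≠ 0 := by
  obtain ⟨c, hc, h⟩ := exists_symmKronecker_lineProj_eq_smul hu hw
  rw [h, trace_smul, trace_vecMulVec, smul_eq_mul]
  exact mul_ne_zero hc <| dotProduct_self_star_eq_zero.not.mpr (symmMul_ne_zero two_ne_zero hu hw)

end SymmetricProduct

section UnorderedPairs

variable {X ι 𝕜 : Type*} [Fintype ι] [RCLike 𝕜] {P : X → Matrix ι ι 𝕜}

/-- The family of projections over `Sym2 X` whose line over `s(x, y)` is `L x ⊙ L y`, where `L x` is
the line onto which `P x` projects. -/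
noncomputable def sym2Proj (P : X → Matrix ι ι 𝕜) : Sym2 X → Matrix (ι × ι) (ι × ι) 𝕜 :=
  Sym2.lift ⟨fun x y ↦ traceNormalize (symmKronecker (P x) (P y)),
    fun x y ↦ congrArg traceNormalize (symmKronecker_comm (P x) (P y))⟩

theorem sym2Proj_mk {x y : X} {u w : ι → 𝕜} (hu : u ≠ 0) (hw : w ≠ 0)
    (hx : P x = lineProj u) (hy : P y = lineProj w) :
    sym2Proj P s(x, y) = lineProj (symmMul u w) := by
  change traceNormalize (symmKronecker (P x) (P y)) = _
  rw [hx, hy, traceNormalize_symmKronecker_lineProj hu hw]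

theorem exists_sym2Proj_eq_lineProj (hline : ∀ x, ∃ v ≠ 0, P x = lineProj v) (z : Sym2 X) :
    ∃ v ≠ 0, sym2Proj P z = lineProj v := by
  induction z using Sym2.ind with
  | _ x y =>
    obtain ⟨u, hu, hx⟩ := hline x
    obtain ⟨w, hw, hy⟩ := hline y
    exact ⟨symmMul u w, symmMul_ne_zero two_ne_zero hu hw, sym2Proj_mk hu hw hx hy⟩

variable [TopologicalSpace X]

theorem continuous_sym2Proj (hP : Continuous P) (hline : ∀ x, ∃ v ≠ 0, P x = lineProj v) :
    Continuous (sym2Proj P) := by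
  refine continuous_quot_lift _ ?_
  have hcont : Continuous fun p : X × X ↦ symmKronecker (P p.1) (P p.2) :=
    continuous_symmKronecker (hP.comp continuous_fst) (hP.comp continuous_snd)
  refine (hcont.matrix_trace.inv₀ fun p ↦ ?_).smul hcont
  obtain ⟨u, hu, hx⟩ := hline p.1
  obtain ⟨w, hw, hy⟩ := hline p.2
  rw [hx, hy]
  exact trace_symmKronecker_lineProj_ne_zero hu hw

theorem HasNonvanishingSection.of_sym2Proj (hline : ∀ x, ∃ v ≠ 0, P x = lineProj v) (x₀ : X)
    (h : HasNonvanishingSection fun x ↦ sym2Proj P s(x, x₀)) : HasNonvanishingSection P := by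
  obtain ⟨s, hs, hsP⟩ := h
  obtain ⟨w, hw, hx₀⟩ := hline x₀
  obtain ⟨g, hg⟩ := exists_leftInverse_symmMul two_ne_zero hw
  refine ⟨fun x ↦ g (s x), (LinearMap.continuous_of_finiteDimensional g).comp hs, fun x ↦ ?_⟩
  obtain ⟨u, hu, hx⟩ := hline x
  obtain ⟨hsx, hfix⟩ := hsP x
  replace hfix : lineProj (symmMul u w) *ᵥ s x = s x := by rwa [← sym2Proj_mk hu hw hx hx₀]
  obtain ⟨c, hc⟩ := exists_eq_smul_of_lineProj_mulVec_eq hfix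
  have hc0 : c ≠ 0 := by
    rintro rfl
    exact hsx (by rw [hc, zero_smul])
  have hgs : g (s x) = c • u := by rw [hc, map_smul, hg]
  simp only [hgs, hx]
  exact ⟨smul_ne_zero hc0 hu, by rw [mulVec_smul, lineProj_mulVec_self hu]⟩

theorem HasNonvanishingSection.of_homotopic_const [CompactSpace X] (hP : Continuous P)
    (hline : ∀ x, ∃ v ≠ 0, P x = lineProj v) {x₀ : X} {Φ : C(X, Sym2 X)}
    (hΦ : ∀ x, Φ x = s(x, x₀)) {z : Sym2 X} (h : Φ.Homotopic (ContinuousMap.const X z)) :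
    HasNonvanishingSection P := by
  obtain ⟨H⟩ := h
  let Q : unitInterval → X → Matrix (ι × ι) (ι × ι) 𝕜 := fun t x ↦ sym2Proj P (H (t, x))
  have hQ : Continuous fun p : unitInterval × X ↦ Q p.1 p.2 :=
    (continuous_sym2Proj hP hline).comp H.continuous
  have hidem (t : unitInterval) (x : X) : IsIdempotentElem (Q t x) := by
    obtain ⟨v, hv, hz⟩ := exists_sym2Proj_eq_lineProj hline (H (t, x))
    simpa only [Q, hz] using isIdempotentElem_lineProj hv
  have hone : HasNonvanishingSection (Q 1) := by
    obtain ⟨v, hv, hz⟩ := exists_sym2Proj_eq_lineProj hline z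
    refine ⟨fun _ ↦ v, continuous_const, fun x ↦ ⟨hv, ?_⟩⟩
    simpa only [Q, H.apply_one, ContinuousMap.const_apply, hz] using lineProj_mulVec_self hv
  have hzero : HasNonvanishingSection (Q 0) := hone.transport hQ hidem 0
  simp only [Q, H.apply_zero, hΦ] at hzero
  exact hzero.of_sym2Proj hline x₀

end UnorderedPairs

section CircleLogarithm

theorem exists_continuous_exp_eq {X : Type*} [TopologicalSpace X] [SimplyConnectedSpace X]
    [LocallyPathConnectedSpace X] {f : X → ℂ} (hf : Continuous f) (hf0 : ∀ x, f x ≠ 0) :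
    ∃ F : X → ℂ, Continuous F ∧ ∀ x, Complex.exp (F x) = f x := by
  obtain ⟨x₀⟩ : Nonempty X := inferInstance
  obtain ⟨F, ⟨-, hF⟩, -⟩ := Complex.isCoveringMapOn_exp.existsUnique_continuousMap_lifts
    ⟨f, hf⟩ (Complex.exp_log (hf0 x₀)) hf0
  exact ⟨F, F.continuous, congrFun hF⟩

theorem exists_circle_eq_apply_neg {f : Circle → ℝ} (hf : Continuous f) : ∃ z, f z = f (-z) := by
  have hodd : Continuous fun z ↦ f z - f (-z) := hf.sub (hf.comp continuous_neg)
  obtain ⟨z, hz⟩ : (0 : ℝ) ∈ Set.range fun z ↦ f z - f (-z) := by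
    rcases le_total (f 1) (f (-1)) with h | h
    · exact mem_range_of_exists_le_of_exists_ge hodd ⟨1, by simpa⟩ ⟨-1, by simpa⟩
    · exact mem_range_of_exists_le_of_exists_ge hodd ⟨-1, by simpa⟩ ⟨1, by simpa⟩
  exact ⟨z, sub_eq_zero.mp hz⟩

theorem not_exists_continuous_circle_log :
    ¬ ∃ L : Circle → ℂ, Continuous L ∧ ∀ z, Complex.exp (L z) = z := by
  rintro ⟨L, hL, hexp⟩
  obtain ⟨z, him⟩ := exists_circle_eq_apply_neg (Complex.continuous_im.comp hL)
  have hre (z : Circle) : (L z).re = 0 := by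
    rw [← Real.exp_eq_one_iff, ← Complex.norm_exp, hexp, Circle.norm_coe]
  have hLz : L z = L (-z) := Complex.ext (by rw [hre, hre]) him
  have hz : (z : ℂ) = -z := by
    rw [← Circle.coe_neg, ← hexp, hLz, hexp]
  exact z.coe_ne_zero (self_eq_neg.mp hz)

theorem exists_circle_ne_mul {f g : ℂ → ℂ} (hf : Continuous f) (hg : Continuous g)
    (hf0 : ∀ z, f z ≠ 0) (hg0 : ∀ z, g z ≠ 0) : ∃ z : Circle, f z ≠ z * g z := by
  by_contra! h
  obtain ⟨F, hF, hFf⟩ := exists_continuous_exp_eq hf hf0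
  obtain ⟨G, hG, hGg⟩ := exists_continuous_exp_eq hg hg0
  refine not_exists_continuous_circle_log ⟨fun z ↦ F z - G z, by fun_prop, fun z ↦ ?_⟩
  rw [Complex.exp_sub, hFf, hGg, h, mul_div_cancel_right₀ _ (hg0 z)]

end CircleLogarithm

section Hopf

theorem S2.sum_sq (x : S2) : x.1 0 ^ 2 + x.1 1 ^ 2 + x.1 2 ^ 2 = 1 := by
  have h := x.2
  rw [mem_sphere_zero_iff_norm, EuclideanSpace.norm_eq, Real.sqrt_eq_one] at h
  simpa [Fin.sum_univ_three] using h

/-- The projection onto the line in `ℂ²` corresponding to `x ∈ S² ≅ ℂP¹`: the matrix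
`(1 + x₀ σ₁ + x₁ σ₂ + x₂ σ₃) / 2`, where the `σᵢ` are the Pauli matrices. -/
noncomputable def blochProj (x : S2) : Matrix (Fin 2) (Fin 2) ℂ :=
  !![(1 + x.1 2) / 2, (x.1 0 - x.1 1 * Complex.I) / 2;
    (x.1 0 + x.1 1 * Complex.I) / 2, (1 - x.1 2) / 2]

theorem continuous_blochProj : Continuous blochProj := by
  refine continuous_matrix fun i j ↦ ?_
  fin_cases i <;> fin_cases j <;>
    simp only [blochProj, Matrix.of_apply, Matrix.cons_val', Matrix.cons_val_zero,
      Matrix.cons_val_one, Matrix.cons_val_fin_one, Fin.zero_eta, Fin.mk_one] <;>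
    fun_prop

/-- The Hopf map `ℂ² → ℝ³` in its homogeneous quadratic form. -/
noncomputable def hopfVec (v : Fin 2 → ℂ) : EuclideanSpace ℝ (Fin 3) :=
  !₂[2 * (v 1 * conj (v 0)).re, 2 * (v 1 * conj (v 0)).im,
    Complex.normSq (v 0) - Complex.normSq (v 1)]

theorem continuous_hopfVec : Continuous hopfVec := by
  have hnormSq := Complex.continuous_normSq
  refine (PiLp.continuous_toLp 2 _).comp (continuous_pi fun i ↦ ?_)
  fin_cases i
  · exact (by fun_prop : Continuous fun v : Fin 2 → ℂ ↦ 2 * (v 1 * conj (v 0)).re)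
  · exact (by fun_prop : Continuous fun v : Fin 2 → ℂ ↦ 2 * (v 1 * conj (v 0)).im)
  · exact (hnormSq.comp (continuous_apply 0)).sub (hnormSq.comp (continuous_apply 1))

theorem norm_hopfVec (v : Fin 2 → ℂ) :
    ‖hopfVec v‖ = Complex.normSq (v 0) + Complex.normSq (v 1) := by
  have hnonneg : 0 ≤ Complex.normSq (v 0) + Complex.normSq (v 1) :=
    add_nonneg (Complex.normSq_nonneg _) (Complex.normSq_nonneg _)
  rw [EuclideanSpace.norm_eq, Real.sqrt_eq_iff_eq_sq (by positivity) hnonneg]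
  simp only [hopfVec, Fin.sum_univ_three, Real.norm_eq_abs, sq_abs, cons_val_zero, cons_val_one,
    cons_val, Complex.mul_re, Complex.mul_im, Complex.conj_re, Complex.conj_im,
    Complex.normSq_apply]
  ring

theorem hopfVec_smul (c : ℂ) (v : Fin 2 → ℂ) :
    hopfVec (c • v) = Complex.normSq c • hopfVec v := by
  ext i
  fin_cases i <;> simp [hopfVec, Complex.normSq_apply] <;> ring

theorem norm_hopfVec_pos {v : Fin 2 → ℂ} (hv : v ≠ 0) : 0 < ‖hopfVec v‖ := by
  rw [norm_hopfVec]
  obtain ⟨i, hi⟩ := Function.ne_iff.mp hv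
  have hpos : 0 < Complex.normSq (v i) := Complex.normSq_pos.mpr hi
  fin_cases i
  · exact add_pos_of_pos_of_nonneg hpos (Complex.normSq_nonneg _)
  · exact add_pos_of_nonneg_of_pos (Complex.normSq_nonneg _) hpos

/-- The Hopf map, sending a nonzero vector of `ℂ²` to the point of `S² ≅ ℂP¹` that represents the
line it spans. -/
noncomputable def hopf (v : {v : Fin 2 → ℂ // v ≠ 0}) : S2 :=
  ⟨‖hopfVec v‖⁻¹ • hopfVec v, by
    simp [norm_smul, inv_mul_cancel₀ (norm_hopfVec_pos v.2).ne']⟩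

theorem continuous_hopf : Continuous hopf := by
  have hcont : Continuous fun v : {v : Fin 2 → ℂ // v ≠ 0} ↦ hopfVec v :=
    continuous_hopfVec.comp continuous_subtype_val
  exact ((hcont.norm.inv₀ fun v ↦ (norm_hopfVec_pos v.2).ne').smul hcont).subtype_mk _

theorem norm_smul_hopf (v : {v : Fin 2 → ℂ // v ≠ 0}) : ‖hopfVec v‖ • (hopf v).1 = hopfVec v :=
  smul_inv_smul₀ (norm_hopfVec_pos v.2).ne' _

theorem hopf_eq_of_hopfVec_eq_smul {v : {v : Fin 2 → ℂ // v ≠ 0}} {x : S2} {t : ℝ} (ht : 0 ≤ t)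
    (h : hopfVec v = t • x.1) : hopf v = x := by
  have hnorm : ‖hopfVec v‖ = t := by
    rw [h, norm_smul, norm_eq_of_mem_sphere, mul_one, Real.norm_of_nonneg ht]
  refine Subtype.ext (smul_right_injective _ (norm_hopfVec_pos v.2).ne' ?_)
  simp only [norm_smul_hopf]
  rw [hnorm, h]

theorem hopf_eq_of_eq_smul {v w : {v : Fin 2 → ℂ // v ≠ 0}} {c : ℂ} (h : w.1 = c • v.1) :
    hopf w = hopf v :=
  hopf_eq_of_hopfVec_eq_smul (mul_nonneg (Complex.normSq_nonneg c) (norm_nonneg (hopfVec v))) <| by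
    rw [h, hopfVec_smul, mul_smul, norm_smul_hopf]

theorem hopf_surjective : Function.Surjective hopf := by
  intro x
  have hx := x.sum_sq
  by_cases h : x.1 2 = -1
  · have h0 : x.1 0 = 0 := by nlinarith
    have h1 : x.1 1 = 0 := by nlinarith
    refine ⟨⟨![0, 1], by simp⟩, hopf_eq_of_hopfVec_eq_smul zero_le_one ?_⟩
    ext i
    fin_cases i <;> simp [hopfVec, h, h0, h1]
  · have hpos : 0 < 1 + x.1 2 := by
      have : -1 ≤ x.1 2 := by nlinarith
      linarith [lt_of_le_of_ne this (Ne.symm h)]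
    have hne : ((1 + x.1 2 : ℝ) : ℂ) ≠ 0 := Complex.ofReal_ne_zero.mpr hpos.ne'
    refine ⟨⟨![(1 + x.1 2 : ℝ), ⟨x.1 0, x.1 1⟩], fun h ↦ hne (congrFun h 0)⟩,
      hopf_eq_of_hopfVec_eq_smul (t := 2 * (1 + x.1 2)) (by positivity) ?_⟩
    ext i
    fin_cases i <;> simp [hopfVec, Complex.normSq_apply] <;> nlinarith

theorem norm_smul_blochProj_hopf (v : {v : Fin 2 → ℂ // v ≠ 0}) :
    (‖hopfVec v‖ : ℂ) • blochProj (hopf v) = vecMulVec v.1 (star v.1) := by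
  have hnorm : ‖hopfVec v‖ = Complex.normSq (v.1 0) + Complex.normSq (v.1 1) := norm_hopfVec v
  have hcoord (k : Fin 3) : ‖hopfVec v‖ * (hopf v).1 k = hopfVec v k :=
    congrArg (· k) (norm_smul_hopf v)
  have h0 : ‖hopfVec v‖ * (hopf v).1 0 = 2 * (v.1 1 * conj (v.1 0)).re := hcoord 0
  have h1 : ‖hopfVec v‖ * (hopf v).1 1 = 2 * (v.1 1 * conj (v.1 0)).im := hcoord 1
  have h2 : ‖hopfVec v‖ * (hopf v).1 2 = Complex.normSq (v.1 0) - Complex.normSq (v.1 1) :=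
    hcoord 2
  simp only [Complex.mul_re, Complex.mul_im, Complex.conj_re, Complex.conj_im,
    Complex.normSq_apply] at hnorm h0 h1 h2
  ext i j
  fin_cases i <;> fin_cases j <;> apply Complex.ext <;>
    simp [blochProj, vecMulVec_apply] <;> linarith

theorem blochProj_hopf (v : {v : Fin 2 → ℂ // v ≠ 0}) : blochProj (hopf v) = lineProj v.1 := by
  have hdot : v.1 ⬝ᵥ star v.1 = (‖hopfVec v‖ : ℂ) := by
    simp [norm_hopfVec, dotProduct, Fin.sum_univ_two, Complex.mul_conj]
  have hne : (‖hopfVec v‖ : ℂ) ≠ 0 := Complex.ofReal_ne_zero.mpr (norm_hopfVec_pos v.2).ne'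
  rw [lineProj_eq_smul, hdot, ← norm_smul_blochProj_hopf, inv_smul_smul₀ hne]

theorem not_hasNonvanishingSection_blochProj : ¬ HasNonvanishingSection blochProj := by
  rintro ⟨q, hq, hfix⟩
  have hspan (v : {v : Fin 2 → ℂ // v ≠ 0}) : ∃ c : ℂ, c ≠ 0 ∧ q (hopf v) = c • v.1 := by
    obtain ⟨hne, hv⟩ := hfix (hopf v)
    rw [blochProj_hopf] at hv
    obtain ⟨c, hc⟩ := exists_eq_smul_of_lineProj_mulVec_eq hv
    exact ⟨c, left_ne_zero_of_smul (hc ▸ hne), hc⟩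
  let north (z : ℂ) : {v : Fin 2 → ℂ // v ≠ 0} := ⟨![1, z], by simp⟩
  let south (z : ℂ) : {v : Fin 2 → ℂ // v ≠ 0} := ⟨![conj z, 1], by simp⟩
  have hnorth : Continuous fun z ↦ q (hopf (north z)) :=
    hq.comp (continuous_hopf.comp (by fun_prop))
  have hsouth : Continuous fun z ↦ q (hopf (south z)) :=
    hq.comp (continuous_hopf.comp (by fun_prop))
  obtain ⟨z, hz⟩ := exists_circle_ne_mul (f := fun z ↦ q (hopf (south z)) 1)
    (g := fun z ↦ q (hopf (north z)) 0)
    ((continuous_apply 1).comp hsouth) ((continuous_apply 0).comp hnorth)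
    (fun z ↦ by obtain ⟨c, hc, h⟩ := hspan (south z); simpa [h, south])
    (fun z ↦ by obtain ⟨c, hc, h⟩ := hspan (north z); simpa [h, north])
  have hequator : hopf (south z) = hopf (north z) :=
    hopf_eq_of_eq_smul (c := conj (z : ℂ))
      (by simp [north, south, Complex.conj_mul', Circle.norm_coe])
  obtain ⟨c, -, hc⟩ := hspan (north z)
  exact hz (by simp [hequator, hc, north, mul_comm])

end Hopf

/-- The map `Φ₀ : S² → Sym2 S²`, `x ↦ ⟦(x, x₀)⟧`, is not homotopic to a constant map. -/
theorem stmt_8 (x₀ : S2) (Φ₀ : C(S2, Sym2 S2)) (hΦ₀ : ∀ x, Φ₀ x = s(x, x₀)) :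
    ∀ y : Sym2 S2, ¬ Φ₀.Homotopic (ContinuousMap.const S2 y) := by
  intro y h
  have hline (x : S2) : ∃ v ≠ 0, blochProj x = lineProj v := by
    obtain ⟨v, rfl⟩ := hopf_surjective x
    exact ⟨v, v.2, blochProj_hopf v⟩
  exact not_hasNonvanishingSection_blochProj (.of_homotopic_const continuous_blochProj hline hΦ₀ h)
end

section
/- Let S² be the unit sphere in three-dimensional Euclidean space, fix x₀ ∈ S², and let Φ₀ : S² → Sym2 S² be the continuous map Φ₀(x) = ⟦(x, x₀)⟧. If φ : S² → Sym2 S² is a continuous map such that φ(x) is a diagonal pair (i.e., φ(x) = ⟦(p,p)⟧ for some p ∈ S², equivalently Sym2.IsDiag (φ x)) for every x ∈ S², then φ is not homotopic to Φ₀. -/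
/-!
Identify `S²` with the complex projective line. Multiplication of linear forms identifies `Sym2 S²`
with the projective plane of binary quadratic forms, over which there is a tautological line bundle.
Its pullback along `x ↦ s(f x, g x)` is the tensor product of the pullbacks of the Hopf bundle along
`f` and `g`. So a diagonal map pulls it back to a square, of even degree, whereas `Φ₀` pulls it back
to the Hopf bundle, of degree one; but homotopic maps have isomorphic pullbacks.

Line bundles are families of lines in a fixed Hermitian space, continuous through their orthogonal
projections; homotopy invariance is the conjugacy of idempotents joined by a path. The degree is
read off from the clutching function of the bundle, after writing the sphere as the closed disk
with its boundary collapsed. Two clutching functions of one bundle differ by a factor that extends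
without zeros to the disk, hence has a square root; so if `z` and `c ^ 2` were both clutching
functions, then `z` would have a continuous square root on the unit circle.
-/

open Module Topology
open scoped ComplexConjugate InnerProductSpace

section Idempotents

theorem semiconjBy_mul_add_one_sub_mul_one_sub {R : Type*} [Ring R] {p q : R}
    (hp : IsIdempotentElem p) (hq : IsIdempotentElem q) :
    SemiconjBy (q * p + (1 - q) * (1 - p)) p q := by
  rw [SemiconjBy, add_mul, mul_add, mul_assoc, mul_assoc, hp.one_sub_mul_self, hp.eq,
    ← mul_assoc q q, ← mul_assoc q (1 - q), hq.mul_one_sub_self, hq.eq, mul_zero, zero_mul]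

theorem isConj_of_continuous_of_isIdempotentElem {T R : Type*} [TopologicalSpace T]
    [PreconnectedSpace T] [NormedRing R] [HasSummableGeomSeries R] {p : T → R} (hp : Continuous p)
    (hidem : ∀ t, IsIdempotentElem (p t)) (s t : T) : IsConj (p s) (p t) := by
  have hloc : IsLocallyConstant fun t ↦ ConjClasses.mk (p t) := by
    refine (IsLocallyConstant.iff_eventually_eq _).2 fun s ↦ ?_
    let u : T → R := fun t ↦ p t * p s + (1 - p t) * (1 - p s)
    have hu : Continuous u := by fun_prop
    have hus : u s = 1 := by
      simp only [u, (hidem s).eq, (hidem s).one_sub.eq, add_sub_cancel]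
    have hunit : ∀ᶠ t in 𝓝 s, IsUnit (u t) :=
      hu.continuousAt.eventually_mem (Units.isOpen.mem_nhds (by simp [hus]))
    filter_upwards [hunit] with t ⟨c, hc⟩
    refine (ConjClasses.mk_eq_mk_iff_isConj.2 ⟨c, ?_⟩).symm
    exact hc ▸ semiconjBy_mul_add_one_sub_mul_one_sub (hidem s) (hidem t)
  exact ConjClasses.mk_eq_mk_iff_isConj.1 (hloc.apply_eq_of_preconnectedSpace s t)

theorem isConj_comp_of_homotopic {X Y R : Type*} [TopologicalSpace X] [CompactSpace X]
    [TopologicalSpace Y] [NormedRing R] [CompleteSpace R] {P : C(Y, R)} (hP : IsIdempotentElem P)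
    {f g : C(X, Y)} (h : f.Homotopic g) : IsConj (P.comp f) (P.comp g) := by
  obtain ⟨H⟩ := h
  let p : C(unitInterval, C(X, R)) := (P.comp H.toContinuousMap).curry
  have hp : ∀ t, IsIdempotentElem (p t) := fun t ↦
    ContinuousMap.ext fun x ↦ DFunLike.congr_fun hP (H (t, x))
  convert isConj_of_continuous_of_isIdempotentElem p.continuous hp 0 1 using 1 <;>
    ext x <;> simp [p]

end Idempotents

section SubspaceFamilies

variable {𝕜 E X Y : Type*} [RCLike 𝕜] [NormedAddCommGroup E] [InnerProductSpace 𝕜 E]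
  [TopologicalSpace X] [TopologicalSpace Y]

theorem continuous_starProjection_span_singleton {s : X → E} (hs : Continuous s)
    (hs0 : ∀ x, s x ≠ 0) : Continuous fun x ↦ (𝕜 ∙ s x).starProjection := by
  have hformula : ∀ x, (𝕜 ∙ s x).starProjection =
      ((‖s x‖ ^ 2 : ℝ) : 𝕜)⁻¹ • (innerSL 𝕜 (s x)).smulRight (s x) := fun x ↦ by
    ext w
    simp [Submodule.starProjection_singleton, div_eq_inv_mul, mul_smul]
  simp only [hformula]
  have hnorm : ∀ x, ((‖s x‖ ^ 2 : ℝ) : 𝕜) ≠ 0 := by simpa using hs0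
  fun_prop (disch := exact hnorm _)

theorem exists_continuousMap_smul_eq {s v : C(X, E)} (hs0 : ∀ x, s x ≠ 0)
    (hv : ∀ x, v x ∈ 𝕜 ∙ s x) : ∃ g : C(X, 𝕜), ∀ x, g x • s x = v x := by
  have hinner : ∀ x, ⟪s x, s x⟫_𝕜 ≠ 0 := fun x ↦ inner_self_ne_zero.2 (hs0 x)
  refine ⟨⟨fun x ↦ ⟪s x, v x⟫_𝕜 / ⟪s x, s x⟫_𝕜, by fun_prop (disch := exact hinner _)⟩, fun x ↦ ?_⟩
  obtain ⟨a, ha⟩ := Submodule.mem_span_singleton.1 (hv x)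
  simp [← ha, inner_smul_right, hs0 x]

variable [FiniteDimensional 𝕜 E] [CompactSpace X]

theorem exists_injective_mapsTo_of_homotopic {L : Y → Submodule 𝕜 E}
    (hL : Continuous fun y ↦ (L y).starProjection) {f g : C(X, Y)} (h : f.Homotopic g) :
    ∃ U : C(X, E →L[𝕜] E), ∀ x, Function.Injective (U x) ∧ ∀ v ∈ L (f x), U x v ∈ L (g x) := by
  have : CompleteSpace E := FiniteDimensional.complete 𝕜 E
  let P : C(Y, E →L[𝕜] E) := ⟨_, hL⟩
  have hP : IsIdempotentElem P := ContinuousMap.ext fun y ↦ (L y).isIdempotentElem_starProjection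
  obtain ⟨U, hU⟩ := isConj_comp_of_homotopic hP h
  refine ⟨U, fun x ↦ ⟨?_, fun v hv ↦ ?_⟩⟩
  · refine Function.LeftInverse.injective (g := (↑U⁻¹ : C(X, E →L[𝕜] E)) x) fun v ↦ ?_
    exact DFunLike.congr_fun (DFunLike.congr_fun U.inv_mul x) v
  · rw [← Submodule.starProjection_eq_self_iff] at hv ⊢
    have hUv : U.1 x (P (f x) v) = P (g x) (U.1 x v) :=
      DFunLike.congr_fun (DFunLike.congr_fun hU.eq x) v
    exact hUv.symm.trans (congrArg _ hv)

theorem exists_continuousMap_ne_zero_mem [ContractibleSpace X] {L : X → Submodule 𝕜 E}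
    (hL : Continuous fun x ↦ (L x).starProjection) (hL0 : ∀ x, L x ≠ ⊥) :
    ∃ v : C(X, E), (∀ x, v x ≠ 0) ∧ ∀ x, v x ∈ L x := by
  obtain ⟨x₀, hx₀⟩ := id_nullhomotopic X
  obtain ⟨U, hU⟩ := exists_injective_mapsTo_of_homotopic hL hx₀.symm
  obtain ⟨v₀, hv₀, hv₀0⟩ := (L x₀).exists_mem_ne_zero_of_ne_bot (hL0 x₀)
  refine ⟨⟨fun x ↦ U x v₀, by fun_prop⟩, fun x ↦ ?_, fun x ↦ (hU x).2 v₀ hv₀⟩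
  exact (map_ne_zero_iff _ (hU x).1).2 hv₀0

end SubspaceFamilies

section Roots

theorem exists_continuousMap_lift_of_nullhomotopic {A B X : Type*} [TopologicalSpace A]
    [TopologicalSpace B] [TopologicalSpace X] {p : B → X} (hp : IsCoveringMap p)
    (hsurj : Function.Surjective p) {f : C(A, X)} (hf : f.Nullhomotopic) :
    ∃ F : C(A, B), ∀ a, p (F a) = f a := by
  obtain ⟨x, hx⟩ := hf
  obtain ⟨H⟩ := hx.symm
  obtain ⟨b, rfl⟩ := hsurj x
  have hH0 : ∀ a, H.toContinuousMap (0, a) = p (ContinuousMap.const A b a) := H.apply_zero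
  let H' := hp.liftHomotopy H.toContinuousMap (.const A b) hH0
  refine ⟨H'.comp ((ContinuousMap.const A 1).prodMk (.id A)), fun a ↦ ?_⟩
  exact (congrFun (hp.liftHomotopy_lifts H.toContinuousMap _ hH0) (1, a)).trans (H.apply_one a)

theorem exists_continuousMap_exp_eq {X : Type*} [TopologicalSpace X] [ContractibleSpace X]
    {g : C(X, ℂ)} (hg : ∀ x, g x ≠ 0) : ∃ l : C(X, ℂ), ∀ x, Complex.exp (l x) = g x := by
  let g' : C(X, {z : ℂ // z ≠ 0}) := ⟨fun x ↦ ⟨g x, hg x⟩, by fun_prop⟩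
  obtain ⟨l, hl⟩ := exists_continuousMap_lift_of_nullhomotopic Complex.isCoveringMap_exp
    (fun z ↦ ⟨Complex.log z, Subtype.ext (Complex.exp_log z.2)⟩)
    ((id_nullhomotopic X).comp_right g')
  exact ⟨l, fun x ↦ congrArg Subtype.val (hl x)⟩

theorem exists_continuousMap_pow_eq {X : Type*} [TopologicalSpace X] [ContractibleSpace X] {n : ℕ}
    (hn : n ≠ 0) {g : C(X, ℂ)} (hg : ∀ x, g x ≠ 0) : ∃ h : C(X, ℂ), ∀ x, h x ^ n = g x := by
  obtain ⟨l, hl⟩ := exists_continuousMap_exp_eq hg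
  refine ⟨⟨fun x ↦ Complex.exp (l x / n), by fun_prop⟩, fun x ↦ ?_⟩
  rw [ContinuousMap.coe_mk, ← Complex.exp_nat_mul, mul_div_cancel₀ _ (Nat.cast_ne_zero.2 hn), hl]

theorem not_exists_continuousMap_sq_eq_circle : ¬ ∃ r : C(Circle, ℂ), ∀ z, r z ^ 2 = z := by
  rintro ⟨r, hr⟩
  let e : ℝ → ℂ := fun θ ↦ Complex.exp (θ / 2 * Complex.I)
  have he : Continuous e := by fun_prop
  have hsq : Set.EqOn ((fun θ ↦ r (Circle.exp θ)) ^ 2) (e ^ 2) Set.univ := fun θ _ ↦ by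
    simp only [Pi.pow_apply, hr, Circle.coe_exp, e, ← Complex.exp_nat_mul]
    push_cast
    ring_nf
  have hperiod : r (Circle.exp (2 * Real.pi)) = r (Circle.exp 0) := by simp
  have he0 : e 0 = 1 := by simp [e]
  have heπ : e (2 * Real.pi) = -1 := by simp [e]
  rcases isPreconnected_univ.eq_or_eq_neg_of_sq_eq (by fun_prop) he.continuousOn hsq
    (fun _ ↦ Complex.exp_ne_zero _) with h | h
  all_goals
    have h0 := h (Set.mem_univ 0)
    have hπ := h (Set.mem_univ (2 * Real.pi))
    simp only [hperiod, h0, Pi.neg_apply, he0, heπ] at hπ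
    norm_num at hπ

end Roots

section Diagonal

theorem isEmbedding_sym2_diag {X : Type*} [TopologicalSpace X] :
    IsEmbedding (Sym2.diag : X → Sym2 X) := by
  have hcont : Continuous (Sym2.diag : X → Sym2 X) :=
    continuous_quot_mk.comp (continuous_id.prodMk continuous_id)
  refine ⟨⟨le_antisymm hcont.le_induced fun U hU ↦ ?_⟩, Sym2.diag_injective⟩
  refine ⟨{e | ∀ x ∈ e, x ∈ U}, ?_, by ext; simp [Sym2.diag]⟩
  rw [← isQuotientMap_quot_mk.isOpen_preimage]
  convert! hU.prod hU
  ext ⟨x, y⟩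
  simp

theorem exists_continuousMap_eq_diag {X Y : Type*} [TopologicalSpace X] [TopologicalSpace Y]
    {φ : C(X, Sym2 Y)} (hφ : ∀ x, (φ x).IsDiag) : ∃ f : C(X, Y), ∀ x, φ x = s(f x, f x) := by
  have hdiag : ∀ x, Sym2.diag ((φ x).diagElem (hφ x)) = φ x := fun x ↦ Sym2.diag_diagElem _
  refine ⟨⟨fun x ↦ (φ x).diagElem (hφ x), ?_⟩, fun x ↦ (hdiag x).symm⟩
  rw [isEmbedding_sym2_diag.continuous_iff]
  exact φ.continuous.congr fun x ↦ (hdiag x).symm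

end Diagonal

section Disk

/-- The closed unit disk in `ℂ`; collapsing its boundary circle to a point gives the sphere. -/
abbrev Disk : Type := Metric.closedBall (0 : ℂ) 1

instance : ContractibleSpace Disk := Metric.contractibleSpace_closedBall zero_le_one

theorem Disk.sq_sqrt_one_sub_norm_sq (z : Disk) : √(1 - ‖z.1‖ ^ 2) ^ 2 = 1 - ‖z.1‖ ^ 2 :=
  Real.sq_sqrt (sub_nonneg.2 (pow_le_one₀ (norm_nonneg _) (mem_closedBall_zero_iff.1 z.2)))

/-- The inclusion of the unit circle as the boundary of the disk. -/
def circleToDisk : C(Circle, Disk) where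
  toFun z := ⟨z, mem_closedBall_zero_iff.2 z.norm_coe.le⟩

/-- The unit vector `(√(1 - ‖z‖²), z)` of `ℂ²`. It spans the fibre of the Hopf bundle over
`diskToSphere z`. -/
noncomputable def spinor : C(Disk, EuclideanSpace ℂ (Fin 2)) where
  toFun z := !₂[(√(1 - ‖z.1‖ ^ 2) : ℂ), z.1]
  continuous_toFun := by fun_prop

theorem spinor_apply_zero (z : Disk) : spinor z 0 = √(1 - ‖z.1‖ ^ 2) := rfl

theorem spinor_apply_one (z : Disk) : spinor z 1 = z.1 := rfl

theorem spinor_ne_zero (z : Disk) : spinor z ≠ 0 := fun h ↦ by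
  have h₀ : (√(1 - ‖z.1‖ ^ 2) : ℂ) = 0 := congr($h 0)
  have h₁ : z.1 = 0 := congr($h 1)
  simp [h₁] at h₀

theorem spinor_circleToDisk (z : Circle) :
    spinor (circleToDisk z) = (z : ℂ) • spinor (circleToDisk 1) := by
  ext i
  fin_cases i <;> simp [spinor, circleToDisk, Circle.norm_coe]

theorem mem_sphere_iff_sum_sq_eq_one {p : EuclideanSpace ℝ (Fin 3)} :
    p ∈ Metric.sphere 0 1 ↔ p 0 ^ 2 + p 1 ^ 2 + p 2 ^ 2 = 1 := by
  simp [EuclideanSpace.sphere_zero_eq 1 zero_le_one, Fin.sum_univ_three]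

/-- The map that collapses the boundary of the disk to the south pole: the composite of `spinor`
with the Hopf map `(a, b) ↦ (2 * conj a * b, |a|² - |b|²)` from the unit sphere of `ℂ²` to that of
`ℂ × ℝ`. -/
noncomputable def diskToSphere : C(Disk, S2) where
  toFun z := ⟨!₂[2 * √(1 - ‖z.1‖ ^ 2) * z.1.re, 2 * √(1 - ‖z.1‖ ^ 2) * z.1.im,
    1 - 2 * ‖z.1‖ ^ 2], mem_sphere_iff_sum_sq_eq_one.2 (by
      have hnorm : ‖z.1‖ ^ 2 = z.1.re ^ 2 + z.1.im ^ 2 := by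
        rw [← Complex.normSq_eq_norm_sq, Complex.normSq_apply, sq, sq]
      simp only [Matrix.cons_val]
      linear_combination 4 * (z.1.re ^ 2 + z.1.im ^ 2) * z.sq_sqrt_one_sub_norm_sq +
        4 * (‖z.1‖ ^ 2 - 1) * hnorm)⟩
  continuous_toFun := by fun_prop

theorem diskToSphere_circleToDisk (z : Circle) :
    diskToSphere (circleToDisk z) = diskToSphere (circleToDisk 1) := by
  simp [diskToSphere, circleToDisk, Circle.norm_coe]

theorem exists_diskToSphere_eq_of_ne {p : S2} (hp : p.1 2 ≠ -1) : ∃ z, diskToSphere z = p := by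
  have hsum := mem_sphere_iff_sum_sq_eq_one.1 p.2
  have hpos : 0 < 1 + p.1 2 := by
    have hlt := lt_of_le_of_ne (by nlinarith : -1 ≤ p.1 2) hp.symm
    linarith
  set r := √((1 + p.1 2) / 2) with hr
  have hr0 : r ≠ 0 := by positivity
  have hrsq : r ^ 2 = (1 + p.1 2) / 2 := Real.sq_sqrt (by positivity)
  let z : ℂ := ⟨p.1 0 / (2 * r), p.1 1 / (2 * r)⟩
  have hz : 1 - ‖z‖ ^ 2 = (1 + p.1 2) / 2 := by
    rw [← Complex.normSq_eq_norm_sq, Complex.normSq_mk]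
    field_simp
    rw [hrsq]
    linear_combination -hsum
  have hz1 : z ∈ Metric.closedBall (0 : ℂ) 1 := by
    rw [mem_closedBall_zero_iff]
    nlinarith
  refine ⟨⟨z, hz1⟩, Subtype.ext (PiLp.ext ?_)⟩
  refine Fin.forall_fin_succ.2 ⟨?_, Fin.forall_fin_two.2 ⟨?_, ?_⟩⟩
  · change 2 * √(1 - ‖z‖ ^ 2) * (p.1 0 / (2 * r)) = p.1 0
    rw [hz, ← hr, mul_div_cancel₀ _ (mul_ne_zero two_ne_zero hr0)]
  · change 2 * √(1 - ‖z‖ ^ 2) * (p.1 1 / (2 * r)) = p.1 1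
    rw [hz, ← hr, mul_div_cancel₀ _ (mul_ne_zero two_ne_zero hr0)]
  · change 1 - 2 * ‖z‖ ^ 2 = p.1 2
    linear_combination 2 * hz

theorem diskToSphere_surjective : Function.Surjective diskToSphere := fun p ↦ by
  by_cases hp : p.1 2 = -1
  · have hsum := mem_sphere_iff_sum_sq_eq_one.1 p.2
    have h₀ : p.1 0 = 0 := by nlinarith
    have h₁ : p.1 1 = 0 := by nlinarith
    refine ⟨circleToDisk 1, Subtype.ext (PiLp.ext ?_)⟩
    norm_num [Fin.forall_fin_succ, diskToSphere, circleToDisk, h₀, h₁, hp]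
  · exact exists_diskToSphere_eq_of_ne hp

theorem isQuotientMap_diskToSphere : IsQuotientMap diskToSphere :=
  .of_surjective_continuous diskToSphere_surjective diskToSphere.continuous

theorem isQuotientMap_sym2Mk_diskToSphere :
    IsQuotientMap fun z : Disk × Disk ↦ s(diskToSphere z.1, diskToSphere z.2) :=
  isQuotientMap_quot_mk.comp (.of_surjective_continuous
    (diskToSphere_surjective.prodMap diskToSphere_surjective) (by fun_prop))

end Disk

section LineBundles

/-- The fibre at `p` of the Hopf line bundle over `S²`: the eigenspace for the eigenvalue `1` of the
Pauli matrix of the direction `p`. -/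
noncomputable def hopfLine (p : S2) : Submodule ℂ (EuclideanSpace ℂ (Fin 2)) :=
  End.eigenspace (Matrix.toEuclideanLin
    !![(p.1 2 : ℂ), p.1 0 - p.1 1 * Complex.I; p.1 0 + p.1 1 * Complex.I, -p.1 2]) 1

theorem mem_hopfLine {p : S2} {v : EuclideanSpace ℂ (Fin 2)} :
    v ∈ hopfLine p ↔ p.1 2 * v 0 + (p.1 0 - p.1 1 * Complex.I) * v 1 = v 0 ∧
      (p.1 0 + p.1 1 * Complex.I) * v 0 - p.1 2 * v 1 = v 1 := by
  simp [hopfLine, PiLp.ext_iff, Fin.forall_fin_two, Matrix.vecHead, Matrix.vecTail,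
    sub_eq_add_neg]

theorem mem_hopfLine_diskToSphere {z : Disk} {v : EuclideanSpace ℂ (Fin 2)} :
    v ∈ hopfLine (diskToSphere z) ↔ √(1 - ‖z.1‖ ^ 2) * conj z.1 * v 1 = ‖z.1‖ ^ 2 * v 0 ∧
      √(1 - ‖z.1‖ ^ 2) * z.1 * v 0 = (1 - ‖z.1‖ ^ 2) * v 1 := by
  have hre := Complex.re_add_im z.1
  have hconj : (z.1.re - z.1.im * Complex.I : ℂ) = conj z.1 := by simp [Complex.ext_iff]
  simp only [mem_hopfLine, diskToSphere, ContinuousMap.coe_mk, Matrix.cons_val, Complex.ofReal_mul,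
    Complex.ofReal_sub, Complex.ofReal_pow, Complex.ofReal_one, Complex.ofReal_ofNat, ← hconj]
  refine and_congr ⟨fun h ↦ ?_, fun h ↦ ?_⟩ ⟨fun h ↦ ?_, fun h ↦ ?_⟩
  · linear_combination h / 2
  · linear_combination 2 * h
  · linear_combination h / 2 - √(1 - ‖z.1‖ ^ 2) * v 0 * hre
  · linear_combination 2 * h + 2 * √(1 - ‖z.1‖ ^ 2) * v 0 * hre

theorem hopfLine_diskToSphere (z : Disk) : hopfLine (diskToSphere z) = ℂ ∙ spinor z := by
  have hsqrt : (√(1 - ‖z.1‖ ^ 2) : ℂ) ^ 2 = 1 - ‖z.1‖ ^ 2 := mod_cast z.sq_sqrt_one_sub_norm_sq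
  have hconj : z.1 * conj z.1 = ‖z.1‖ ^ 2 := Complex.mul_conj' z.1
  refine le_antisymm (fun v hv ↦ ?_) ((Submodule.span_singleton_le_iff_mem _ _).2 ?_)
  · obtain ⟨h₀, h₁⟩ := mem_hopfLine_diskToSphere.1 hv
    refine Submodule.mem_span_singleton.2 ⟨√(1 - ‖z.1‖ ^ 2) * v 0 + conj z.1 * v 1,
      PiLp.ext (Fin.forall_fin_two.2 ⟨?_, ?_⟩)⟩
    · rw [PiLp.smul_apply, spinor_apply_zero, smul_eq_mul]
      linear_combination v 0 * hsqrt + h₀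
    · rw [PiLp.smul_apply, spinor_apply_one, smul_eq_mul]
      linear_combination v 1 * hconj + h₁
  · rw [mem_hopfLine_diskToSphere, spinor_apply_zero, spinor_apply_one]
    constructor
    · linear_combination √(1 - ‖z.1‖ ^ 2) * hconj
    · linear_combination z.1 * hsqrt

theorem finrank_hopfLine (p : S2) : finrank ℂ (hopfLine p) = 1 := by
  obtain ⟨z, rfl⟩ := diskToSphere_surjective p
  rw [hopfLine_diskToSphere, finrank_span_singleton (spinor_ne_zero z)]

theorem continuous_starProjection_hopfLine : Continuous fun p ↦ (hopfLine p).starProjection := by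
  rw [isQuotientMap_diskToSphere.continuous_iff]
  simp only [Function.comp_def, hopfLine_diskToSphere]
  exact continuous_starProjection_span_singleton spinor.continuous spinor_ne_zero

/-- Multiplication of linear forms in two variables, with values in binary quadratic forms. -/
noncomputable def mulForms : EuclideanSpace ℂ (Fin 2) →ₗ[ℂ] EuclideanSpace ℂ (Fin 2) →ₗ[ℂ]
    EuclideanSpace ℂ (Fin 3) :=
  LinearMap.mk₂ ℂ (fun u v ↦ !₂[u 0 * v 0, u 0 * v 1 + u 1 * v 0, u 1 * v 1])
    (fun _ _ _ ↦ by ext i; fin_cases i <;> simp <;> ring)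
    (fun _ _ _ ↦ by ext i; fin_cases i <;> simp <;> ring)
    (fun _ _ _ ↦ by ext i; fin_cases i <;> simp <;> ring)
    (fun _ _ _ ↦ by ext i; fin_cases i <;> simp <;> ring)

theorem mulForms_apply (u v : EuclideanSpace ℂ (Fin 2)) :
    mulForms u v = !₂[u 0 * v 0, u 0 * v 1 + u 1 * v 0, u 1 * v 1] := rfl

theorem mulForms_comm (u v : EuclideanSpace ℂ (Fin 2)) : mulForms u v = mulForms v u := by
  simp only [mulForms_apply, mul_comm, add_comm]

theorem mulForms_ne_zero {u v : EuclideanSpace ℂ (Fin 2)} (hu : u ≠ 0) (hv : v ≠ 0) :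
    mulForms u v ≠ 0 := fun h ↦ by
  have h₀ : u 0 * v 0 = 0 := congr($h 0)
  have h₁ : u 0 * v 1 + u 1 * v 0 = 0 := congr($h 1)
  have h₂ : u 1 * v 1 = 0 := congr($h 2)
  simp only [ne_eq, PiLp.ext_iff, Fin.forall_fin_two, PiLp.zero_apply] at hu hv
  rcases mul_eq_zero.1 h₀ with h₀ | h₀ <;> rcases mul_eq_zero.1 h₂ with h₂ | h₂ <;> simp_all

theorem continuous_mulForms {X : Type*} [TopologicalSpace X] {u v : X → EuclideanSpace ℂ (Fin 2)}
    (hu : Continuous u) (hv : Continuous v) : Continuous fun x ↦ mulForms (u x) (v x) := by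
  simp only [mulForms_apply]
  fun_prop

/-- The fibre at `s(p, q)` of the tautological line bundle over `Sym2 S²`, regarded as the space of
binary quadratic forms up to scalars. -/
noncomputable def pairLine : Sym2 S2 → Submodule ℂ (EuclideanSpace ℂ (Fin 3)) :=
  Sym2.lift ⟨fun p q ↦ (hopfLine p).map₂ mulForms (hopfLine q), fun p q ↦ by
    have hflip : mulForms.flip = mulForms := LinearMap.ext₂ fun u v ↦ mulForms_comm v u
    simpa only [hflip] using (Submodule.map₂_flip mulForms (hopfLine p) (hopfLine q)).symm⟩

theorem pairLine_diskToSphere (z w : Disk) : pairLine s(diskToSphere z, diskToSphere w) =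
    ℂ ∙ mulForms (spinor z) (spinor w) := by
  simp [pairLine, hopfLine_diskToSphere, Submodule.map₂_span_span]

theorem finrank_pairLine (e : Sym2 S2) : finrank ℂ (pairLine e) = 1 := by
  obtain ⟨z, rfl⟩ := isQuotientMap_sym2Mk_diskToSphere.surjective e
  rw [pairLine_diskToSphere,
    finrank_span_singleton (mulForms_ne_zero (spinor_ne_zero _) (spinor_ne_zero _))]

theorem continuous_starProjection_pairLine : Continuous fun e ↦ (pairLine e).starProjection := by
  rw [isQuotientMap_sym2Mk_diskToSphere.continuous_iff]
  simp only [Function.comp_def, pairLine_diskToSphere]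
  exact continuous_starProjection_span_singleton
    (continuous_mulForms (by fun_prop) (by fun_prop))
    fun z ↦ mulForms_ne_zero (spinor_ne_zero _) (spinor_ne_zero _)

end LineBundles

section Clutching

variable {E : Type*} [NormedAddCommGroup E] [InnerProductSpace ℂ E]

/-- `c` is a clutching function of the family of lines `L` over the sphere: the pullback of `L` to
the disk has a nowhere zero section whose value at a boundary point `z` is `c z` times its value
at `1`. The winding number of `c` is the degree of `L`. -/
def IsClutching (L : S2 → Submodule ℂ E) (c : Circle → ℂ) : Prop :=
  ∃ v : C(Disk, E), (∀ z, v z ≠ 0) ∧ (∀ z, v z ∈ L (diskToSphere z)) ∧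
    ∀ z, v (circleToDisk z) = c z • v (circleToDisk 1)

theorem isClutching_hopfLine : IsClutching hopfLine ((↑) : Circle → ℂ) :=
  ⟨spinor, spinor_ne_zero, fun z ↦ hopfLine_diskToSphere z ▸ Submodule.mem_span_singleton_self _,
    spinor_circleToDisk⟩

theorem isClutching_hopfLine_const (p : S2) : IsClutching (fun _ ↦ hopfLine p) fun _ ↦ 1 := by
  obtain ⟨v, hv, hv0⟩ := (hopfLine p).exists_mem_ne_zero_of_ne_bot
    (Submodule.one_le_finrank_iff.1 (finrank_hopfLine p).ge)
  exact ⟨.const _ v, fun _ ↦ hv0, fun _ ↦ hv, fun _ ↦ (one_smul _ _).symm⟩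

theorem IsClutching.pairLine {f g : S2 → S2} {c d : Circle → ℂ}
    (hf : IsClutching (fun x ↦ hopfLine (f x)) c) (hg : IsClutching (fun x ↦ hopfLine (g x)) d) :
    IsClutching (fun x ↦ pairLine s(f x, g x)) fun z ↦ c z * d z := by
  obtain ⟨u, hu0, hu, hc⟩ := hf
  obtain ⟨v, hv0, hv, hd⟩ := hg
  refine ⟨⟨_, continuous_mulForms u.continuous v.continuous⟩,
    fun z ↦ mulForms_ne_zero (hu0 z) (hv0 z), fun z ↦ Submodule.apply_mem_map₂ _ (hu z) (hv z),
    fun z ↦ ?_⟩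
  simp [hc z, hd z, mul_smul, smul_comm (c z)]

theorem IsClutching.of_homotopic [FiniteDimensional ℂ E] {Y : Type*} [TopologicalSpace Y]
    {L : Y → Submodule ℂ E} (hL : Continuous fun y ↦ (L y).starProjection) {f g : C(S2, Y)}
    (h : f.Homotopic g) {c : Circle → ℂ} (hc : IsClutching (fun x ↦ L (f x)) c) :
    IsClutching (fun x ↦ L (g x)) c := by
  obtain ⟨U, hU⟩ := exists_injective_mapsTo_of_homotopic hL h
  obtain ⟨v, hv0, hv, hc⟩ := hc
  refine ⟨⟨fun z ↦ U (diskToSphere z) (v z), by fun_prop⟩,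
    fun z ↦ (map_ne_zero_iff _ (hU _).1).2 (hv0 z), fun z ↦ (hU _).2 _ (hv z), fun z ↦ ?_⟩
  simp [hc z, diskToSphere_circleToDisk z]

section Line

variable {L : S2 → Submodule ℂ E} (hL1 : ∀ x, finrank ℂ (L x) = 1)
include hL1

theorem exists_isClutching [FiniteDimensional ℂ E] (hL : Continuous fun x ↦ (L x).starProjection) :
    ∃ c : C(Circle, ℂ), IsClutching L c := by
  obtain ⟨v, hv0, hv⟩ := exists_continuousMap_ne_zero_mem (hL.comp diskToSphere.continuous)
    fun z ↦ Submodule.one_le_finrank_iff.1 (hL1 (diskToSphere z)).ge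
  have hspan : ∀ z, v (circleToDisk z) ∈ ℂ ∙ v (circleToDisk 1) := fun z ↦ by
    have hmem := hv (circleToDisk z)
    rwa [diskToSphere_circleToDisk,
      eq_span_singleton_of_mem_of_finrank_eq_one (hL1 _) (hv _) (hv0 _)] at hmem
  obtain ⟨c, hc⟩ := exists_continuousMap_smul_eq (s := .const Circle (v (circleToDisk 1)))
    (v := v.comp circleToDisk) (fun _ ↦ hv0 _) hspan
  exact ⟨c, v, hv0, hv, fun z ↦ (hc z).symm⟩

theorem IsClutching.exists_mul_eq {c d : Circle → ℂ} (hc : IsClutching L c)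
    (hd : IsClutching L d) : ∃ g : C(Disk, ℂ), (∀ z, g z ≠ 0) ∧
      ∀ z, g (circleToDisk z) * c z = d z * g (circleToDisk 1) := by
  obtain ⟨v, hv0, hv, hc⟩ := hc
  obtain ⟨w, hw0, hw, hd⟩ := hd
  have hspan : ∀ z, w z ∈ ℂ ∙ v z := fun z ↦
    eq_span_singleton_of_mem_of_finrank_eq_one (hL1 _) (hv z) (hv0 z) ▸ hw z
  obtain ⟨g, hg⟩ := exists_continuousMap_smul_eq hv0 hspan
  refine ⟨g, fun z hz ↦ hw0 z (by simp [← hg, hz]), fun z ↦ ?_⟩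
  refine smul_left_injective ℂ (hv0 (circleToDisk 1)) ?_
  simp only [mul_smul, ← hc z, hg, hd z]

theorem IsClutching.not_mul_self (hid : IsClutching L ((↑) : Circle → ℂ)) (c : C(Circle, ℂ)) :
    ¬ IsClutching L fun z ↦ c z * c z := fun hc ↦ by
  obtain ⟨g, hg0, hg⟩ := hid.exists_mul_eq hL1 hc
  obtain ⟨h, hsq⟩ := exists_continuousMap_pow_eq two_ne_zero hg0
  have h0 : ∀ z, h z ≠ 0 := fun z hz ↦ hg0 z (by simp [← hsq, hz])
  refine not_exists_continuousMap_sq_eq_circle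
    ⟨⟨fun z ↦ c z * h (circleToDisk 1) / h (circleToDisk z),
      by fun_prop (disch := exact fun _ ↦ h0 _)⟩, fun z ↦ ?_⟩
  simp only [ContinuousMap.coe_mk, div_pow, mul_pow, hsq]
  rw [div_eq_iff (hg0 _), mul_comm (z : ℂ), hg, sq]

end Line

end Clutching

/-- A continuous map `φ : S² → Sym2 S²` whose values are all diagonal pairs is not
homotopic to the map `Φ₀ : x ↦ ⟦(x, x₀)⟧`. -/
theorem stmt_9 (x₀ : S2) (Φ₀ φ : C(S2, Sym2 S2)) (hΦ₀ : ∀ x, Φ₀ x = s(x, x₀))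
    (hφ : ∀ x, (φ x).IsDiag) : ¬ φ.Homotopic Φ₀ := by
  intro hhom
  obtain ⟨f, hf⟩ := exists_continuousMap_eq_diag hφ
  obtain ⟨c, hc⟩ := exists_isClutching (fun x ↦ finrank_hopfLine (f x))
    (continuous_starProjection_hopfLine.comp f.continuous)
  have hsquare : IsClutching (fun x ↦ pairLine (φ x)) fun z ↦ c z * c z := by
    simpa only [hf] using hc.pairLine hc
  have hHopf : IsClutching (fun x ↦ pairLine (Φ₀ x)) ((↑) : Circle → ℂ) := by
    simpa only [hΦ₀, mul_one] using isClutching_hopfLine.pairLine (isClutching_hopfLine_const x₀)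
  exact (hHopf.of_homotopic continuous_starProjection_pairLine hhom.symm).not_mul_self
    (fun x ↦ finrank_pairLine (φ x)) c hsquare
end

section
/- Let S² be the unit sphere in three-dimensional Euclidean space, fix x₀ ∈ S², and let Φ₀ : S² → Sym2 S² be the continuous map Φ₀(x) = ⟦(x, x₀)⟧. Then every continuous map φ : S² → Sym2 S² that is homotopic to Φ₀ meets the antipodal set: there exist x ∈ S² and p ∈ S² such that φ(x) = ⟦(p, −p)⟧. -/
/-!
The spinors of a point of `S²` form a line in `ℂ²`, so an unordered pair of points of `S²` amounts
to the line spanned by the nonzero symmetric tensor `a ⊗ b + b ⊗ a` of their spinors: this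
identifies `Sym2 S²` with the projective plane of `Sym² ℂ²`. Homotopic maps `f : S² → Sym2 S²` pull
the tautological line bundle back to isomorphic bundles, and for `x ↦ {x, x₀}` the pullback is the
tautological bundle of `S² = ℙ¹`; so for every `f` in this homotopy class the line `f x` is spanned
by a tensor `τ v` that depends continuously and `S¹`-equivariantly on the unit spinor `v` of `x`.

If no `f x = {p, q}` is antipodal, then `p + q` never vanishes, and the component of `τ v` in the
square of the spinor line of `p + q` is nonzero. It is thus a continuous nowhere vanishing family of
squares `w ⊗ w` with `w` unique up to sign. On a Hopf circle, equivariance makes the family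
`z ↦ z • (w₀ ⊗ w₀)`, which has no continuous square root since `z ↦ z` has none; but the circle
contracts in `S³`, so the family must have one.
-/

namespace EquivariantLift

open Matrix
open scoped ComplexConjugate ComplexOrder Topology

section Idempotents

/-- `f * e + (1 - f) * (1 - e)` intertwines the idempotents `e` and `f`, and equals `1` at `f = e`,
so it is a unit for `f` near `e`. -/
theorem isConj_of_isPreconnected_of_isIdempotentElem {A : Type*} [NormedRing A]
    [HasSummableGeomSeries A] {s : Set A} (hs : IsPreconnected s)
    (hidem : ∀ e ∈ s, IsIdempotentElem e) {e f : A} (he : e ∈ s) (hf : f ∈ s) : IsConj e f := by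
  refine hs.induction₂ IsConj (fun e he ↦ ?_) (fun _ _ _ _ _ _ ↦ IsConj.trans)
    (fun _ _ _ _ ↦ IsConj.symm) he hf
  have hunit : ∀ᶠ f in 𝓝[s] e, IsUnit (f * e + (1 - f) * (1 - e)) := by
    have hcont : Continuous fun f : A ↦ f * e + (1 - f) * (1 - e) := by fun_prop
    refine (hcont.tendsto e).eventually (Units.isOpen.mem_nhds ?_) |>.filter_mono nhdsWithin_le_nhds
    simp [(hidem e he).eq, (hidem e he).one_sub.eq]
  filter_upwards [hunit, self_mem_nhdsWithin] with f hu hf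
  have he' := (hidem e he).eq
  have hf' : f * (f * e) = f * e := by rw [← mul_assoc, (hidem f hf).eq]
  refine ⟨hu.unit, ?_⟩
  simp only [SemiconjBy, IsUnit.unit_spec, add_mul, mul_add, mul_assoc, he', sub_mul, mul_sub,
    one_mul, mul_one, (hidem f hf).eq, hf', sub_self, add_zero]

theorem isConj_comp_of_homotopic {X Y A : Type*} [TopologicalSpace X] [CompactSpace X]
    [TopologicalSpace Y] [NormedRing A] [CompleteSpace A] {f g : C(X, Y)} (hfg : f.Homotopic g)
    (E : C(Y, A)) (hE : ∀ y, IsIdempotentElem (E y)) : IsConj (E.comp f) (E.comp g) := by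
  obtain ⟨H⟩ := hfg
  have hpath : Continuous fun t ↦ E.comp (H.curry t) :=
    E.continuous_postcomp.comp H.curry.continuous
  refine isConj_of_isPreconnected_of_isIdempotentElem (isPreconnected_range hpath) ?_
    ⟨0, ?_⟩ ⟨1, ?_⟩
  · rintro _ ⟨t, rfl⟩
    exact ContinuousMap.ext fun x ↦ hE _
  · ext x
    simp
  · ext x
    simp

end Idempotents

section SquareRoots

variable {n X T : Type*} [TopologicalSpace X] [TopologicalSpace T]

/-- The family `R` of matrices has the form `r rᵀ` for a continuous family `r` of vectors, i.e. it
lifts along the double cover `r ↦ r rᵀ` of the cone of rank-one symmetric matrices. -/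
def HasContinuousRoot (R : X → Matrix n n ℂ) : Prop :=
  ∃ r : X → n → ℂ, Continuous r ∧ ∀ x, R x = vecMulVec (r x) (r x)

theorem hasContinuousRoot_const (w : n → ℂ) :
    HasContinuousRoot fun _ : X ↦ vecMulVec w w :=
  ⟨fun _ ↦ w, continuous_const, fun _ ↦ rfl⟩

theorem trace_conjTranspose_vecMulVec_mul [Fintype n] (r w : n → ℂ) :
    ((vecMulVec r r)ᴴ * vecMulVec w w).trace = (star r ⬝ᵥ w) ^ 2 := by
  rw [conjTranspose_vecMulVec, vecMulVec_mul_vecMulVec, trace_vecMulVec, dotProduct_smul,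
    smul_eq_mul, sq]

/-- If `R = r rᵀ` and `R' = w wᵀ`, then `R' r̄ = ⟪r, w⟫ w` depends continuously on the parameter and
`⟪r, w⟫ ^ 2 = tr (Rᴴ R')`. -/
theorem HasContinuousRoot.of_trace_mem_slitPlane [Fintype n] {R R' : X → Matrix n n ℂ}
    (hR : HasContinuousRoot R) (hR' : Continuous R') (hroot : ∀ x, ∃ w, R' x = vecMulVec w w)
    (htrace : ∀ x, ((R x)ᴴ * R' x).trace ∈ Complex.slitPlane) : HasContinuousRoot R' := by
  obtain ⟨r, hr, hRr⟩ := hR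
  have hRc : Continuous R := by
    rw [funext hRr]
    exact hr.matrix_vecMulVec hr
  obtain ⟨c, hc, hcsq⟩ : ∃ c : X → ℂ, Continuous c ∧ ∀ x, c x ^ 2 = ((R x)ᴴ * R' x).trace :=
    ⟨fun x ↦ ((R x)ᴴ * R' x).trace ^ ((2 : ℕ) : ℂ)⁻¹,
      (hRc.matrix_conjTranspose.matrix_mul hR').matrix_trace.cpow continuous_const htrace,
      fun x ↦ Complex.cpow_nat_inv_pow _ two_ne_zero⟩
  have hc0 (x : X) : c x ≠ 0 := fun h ↦
    Complex.slitPlane_ne_zero (htrace x) <| by rw [← hcsq, h, zero_pow two_ne_zero]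
  refine ⟨fun x ↦ (c x)⁻¹ • (R' x *ᵥ star (r x)),
    (hc.inv₀ hc0).smul (hR'.matrix_mulVec hr.star), fun x ↦ ?_⟩
  obtain ⟨w, hw⟩ := hroot x
  have hdot : (star (r x) ⬝ᵥ w) ^ 2 = c x ^ 2 := by
    rw [hcsq, hRr, hw, trace_conjTranspose_vecMulVec_mul]
  have hmul : R' x *ᵥ star (r x) = (star (r x) ⬝ᵥ w) • w := by
    rw [hw, vecMulVec_mulVec, op_smul_eq_smul, dotProduct_comm]
  beta_reduce
  rw [hmul, smul_smul, smul_vecMulVec, vecMulVec_smul, smul_smul, ← sq, mul_pow, hdot, ← mul_pow,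
    inv_mul_cancel₀ (hc0 x), one_pow, one_smul, hw]

theorem hasContinuousRoot_iff_of_preconnectedSpace [Finite n] [CompactSpace X]
    [PreconnectedSpace T] {R : T → X → Matrix n n ℂ} (hR : Continuous fun q : T × X ↦ R q.1 q.2)
    (hne : ∀ t x, R t x ≠ 0) (hroot : ∀ t x, ∃ w, R t x = vecMulVec w w) (s t : T) :
    HasContinuousRoot (R s) ↔ HasContinuousRoot (R t) := by
  cases nonempty_fintype n
  have hRt (t : T) : Continuous (R t) := hR.comp (Continuous.prodMk_right t)
  refine PreconnectedSpace.induction₂' (fun s t ↦ HasContinuousRoot (R s) ↔ HasContinuousRoot (R t))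
    (fun s ↦ ?_) ⟨fun _ _ _ ↦ Iff.trans⟩ s t
  have hnear : ∀ᶠ t in 𝓝 s, ∀ x ∈ Set.univ, ((R s x)ᴴ * R t x).trace ∈ Complex.slitPlane := by
    refine isCompact_univ.eventually_forall_of_forall_eventually fun x _ ↦ ?_
    have hcont : Continuous fun q : T × X ↦ ((R s q.2)ᴴ * R q.1 q.2).trace :=
      ((((hRt s).comp continuous_snd).matrix_conjTranspose).matrix_mul hR).matrix_trace
    refine hcont.continuousAt.eventually_mem (Complex.isOpen_slitPlane.mem_nhds ?_)
    exact Or.inl (Complex.pos_iff.1 <| (posSemidef_conjTranspose_mul_self _).trace_nonneg.lt_of_ne'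
      (trace_conjTranspose_mul_self_eq_zero_iff.not.2 (hne s x))).1
  filter_upwards [hnear] with t ht
  have ht' (x : X) : ((R t x)ᴴ * R s x).trace ∈ Complex.slitPlane := by
    have hconj : ((R t x)ᴴ * R s x).trace = conj ((R s x)ᴴ * R t x).trace := by
      rw [starRingEnd_apply, ← trace_conjTranspose, conjTranspose_mul, conjTranspose_conjTranspose]
    simpa [hconj, Complex.mem_slitPlane_iff] using ht x trivial
  have hiff : HasContinuousRoot (R s) ↔ HasContinuousRoot (R t) :=
    ⟨fun h ↦ h.of_trace_mem_slitPlane (hRt t) (hroot t) fun x ↦ ht x trivial,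
      fun h ↦ h.of_trace_mem_slitPlane (hRt s) (hroot s) ht'⟩
  exact ⟨hiff, hiff.symm⟩

/-- For a square root `r` of the identity, the function `z ↦ r z⁻¹ * r z` would take only the values
`±1`, but it is `1` at `z = 1` and `-1` at `z = -1`. -/
theorem not_continuous_of_sq_eq_coe {r : Circle → ℂ} (hsq : ∀ z, r z ^ 2 = z) : ¬ Continuous r := by
  intro hr
  have hcont : Continuous fun z ↦ r z⁻¹ * r z := by fun_prop
  have hone : Set.EqOn ((fun z ↦ r z⁻¹ * r z) ^ 2) 1 Set.univ := fun z _ ↦ by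
    simp [mul_pow, hsq]
  rcases isPreconnected_univ.eq_one_or_eq_neg_one_of_sq_eq hcont.continuousOn hone with h | h
  · have h : r (-1)⁻¹ * r (-1) = 1 := h (Set.mem_univ (-1))
    norm_num [← sq, hsq] at h
  · have h : r 1⁻¹ * r 1 = -1 := h (Set.mem_univ 1)
    norm_num [← sq, hsq] at h

theorem not_hasContinuousRoot_circle_smul [Finite n] {M : Matrix n n ℂ} (hM : M ≠ 0) :
    ¬ HasContinuousRoot fun z : Circle ↦ (z : ℂ) • M := by
  cases nonempty_fintype n
  rintro ⟨r, hr, hMr⟩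
  replace hMr (z : Circle) : (z : ℂ) • M = vecMulVec (r z) (r z) := hMr z
  have hM1 : vecMulVec (r 1) (r 1) = M := by simpa using (hMr 1).symm
  have hr1 : star (r 1) ⬝ᵥ r 1 ≠ 0 := by
    rw [Ne, dotProduct_star_self_eq_zero]
    intro h
    exact hM (by rw [← hM1, h, zero_vecMulVec])
  have hdot (z : Circle) : (star (r 1) ⬝ᵥ r z) ^ 2 = z * (star (r 1) ⬝ᵥ r 1) ^ 2 := by
    rw [← trace_conjTranspose_vecMulVec_mul, ← trace_conjTranspose_vecMulVec_mul, ← hMr z, hM1,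
      Matrix.mul_smul, trace_smul, smul_eq_mul]
  refine not_continuous_of_sq_eq_coe (r := fun z ↦ (star (r 1) ⬝ᵥ r z) / (star (r 1) ⬝ᵥ r 1))
    (fun z ↦ ?_) ((continuous_const.dotProduct hr).div_const _)
  rw [div_pow, hdot, mul_div_cancel_right₀ _ (pow_ne_zero 2 hr1)]

end SquareRoots

section RankOne

variable {n : Type*}

/-- The orthogonal projection onto the line spanned by `w`; it is `0` for `w = 0`. -/
noncomputable def lineProj [Fintype n] (w : n → ℂ) : Matrix n n ℂ :=
  (star w ⬝ᵥ w)⁻¹ • vecMulVec w (star w)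

theorem lineProj_mulVec [Fintype n] (w x : n → ℂ) :
    lineProj w *ᵥ x = ((star w ⬝ᵥ w)⁻¹ * (star w ⬝ᵥ x)) • w := by
  rw [lineProj, smul_mulVec, vecMulVec_mulVec, op_smul_eq_smul, smul_smul]

theorem lineProj_mulVec_self [Fintype n] (w : n → ℂ) : lineProj w *ᵥ w = w := by
  rcases eq_or_ne w 0 with rfl | hw
  · exact mulVec_zero _
  · rw [lineProj_mulVec, inv_mul_cancel₀ (mt dotProduct_star_self_eq_zero.1 hw), one_smul]

theorem isIdempotentElem_lineProj [Fintype n] (w : n → ℂ) : IsIdempotentElem (lineProj w) := by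
  have h : lineProj w * ((star w ⬝ᵥ w)⁻¹ • vecMulVec w (star w)) =
      (star w ⬝ᵥ w)⁻¹ • vecMulVec w (star w) := by
    rw [Matrix.mul_smul, mul_vecMulVec, lineProj_mulVec_self]
  exact h

/-- The symmetrization `a ⊗ b + b ⊗ a`, as a vector indexed by `n × n`. -/
def symTensor (a b : n → ℂ) : n × n → ℂ :=
  fun i ↦ a i.1 * b i.2 + a i.2 * b i.1

theorem symTensor_smul_left (c : ℂ) (a b : n → ℂ) : symTensor (c • a) b = c • symTensor a b := by
  ext i
  simp only [symTensor, Pi.smul_apply, smul_eq_mul]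
  ring

theorem symTensor_ne_zero {a b : n → ℂ} (ha : a ≠ 0) (hb : b ≠ 0) : symTensor a b ≠ 0 := by
  intro h
  have hab (i j : n) : a i * b j + a j * b i = 0 := congrFun h (i, j)
  have hdiag (i : n) : a i * b i = 0 := by linear_combination hab i i / 2
  obtain ⟨i, hi⟩ := Function.ne_iff.1 ha
  obtain ⟨j, hj⟩ := Function.ne_iff.1 hb
  have hbi : b i = 0 := (mul_eq_zero.1 (hdiag i)).resolve_left hi
  exact mul_ne_zero hi hj (by simpa [hbi] using hab i j)

/-- The symmetrized tensor product of two matrices, normalized so that it takes the pair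
`(a aᴴ, b bᴴ)` to `t tᴴ` for `t = symTensor a b`. -/
def symKronecker (A B : Matrix n n ℂ) : Matrix (n × n) (n × n) ℂ :=
  of fun i j ↦ A i.1 j.1 * B i.2 j.2 + A i.1 j.2 * B i.2 j.1 +
    A i.2 j.1 * B i.1 j.2 + A i.2 j.2 * B i.1 j.1

theorem symKronecker_comm (A B : Matrix n n ℂ) : symKronecker A B = symKronecker B A := by
  ext i j
  simp only [symKronecker, of_apply]
  ring

theorem symKronecker_vecMulVec_star (a b : n → ℂ) :
    symKronecker (vecMulVec a (star a)) (vecMulVec b (star b)) =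
      vecMulVec (symTensor a b) (star (symTensor a b)) := by
  ext i j
  simp only [symKronecker, symTensor, of_apply, vecMulVec_apply, Pi.star_apply, star_add, star_mul']
  ring

theorem continuous_symKronecker {X : Type*} [TopologicalSpace X] {A B : X → Matrix n n ℂ}
    (hA : Continuous A) (hB : Continuous B) : Continuous fun x ↦ symKronecker (A x) (B x) := by
  refine continuous_matrix fun i j ↦ ?_
  have hA (i j : n) : Continuous fun x ↦ A x i j := hA.matrix_elem i j
  have hB (i j : n) : Continuous fun x ↦ B x i j := hB.matrix_elem i j
  simp only [symKronecker, of_apply]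
  fun_prop

end RankOne

section Spinors

/-- The Hopf map `ℂ² → ℝ³` in spinor form, `v ↦ (vᴴ σ₁ v, vᴴ σ₂ v, vᴴ σ₃ v)` for the Pauli matrices
`σᵢ`. -/
noncomputable def hopfVec (v : Fin 2 → ℂ) : EuclideanSpace ℝ (Fin 3) :=
  !₂[2 * (conj (v 0) * v 1).re, 2 * (conj (v 0) * v 1).im,
    Complex.normSq (v 0) - Complex.normSq (v 1)]

/-- The positive semidefinite matrix `(‖y‖ + y₀ σ₁ + y₁ σ₂ + y₂ σ₃) / 2`. Its range is the line of
spinors over `y`. -/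
noncomputable def spinMatrix (y : EuclideanSpace ℝ (Fin 3)) : Matrix (Fin 2) (Fin 2) ℂ :=
  !![(‖y‖ + y 2) / 2, (y 0 - Complex.I * y 1) / 2;
    (y 0 + Complex.I * y 1) / 2, (‖y‖ - y 2) / 2]

theorem continuous_spinMatrix : Continuous spinMatrix := by
  refine continuous_matrix fun i j ↦ ?_
  fin_cases i <;> fin_cases j <;>
    simp only [spinMatrix, of_apply, cons_val', cons_val_zero, cons_val_one, cons_val_fin_one,
      Fin.zero_eta, Fin.mk_one] <;> fun_prop

theorem continuous_hopfVec : Continuous hopfVec := by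
  refine (PiLp.continuous_toLp 2 _).comp (continuous_pi fun i ↦ ?_)
  fin_cases i
  · exact continuous_const.mul (Complex.continuous_re.comp (by fun_prop))
  · exact continuous_const.mul (Complex.continuous_im.comp (by fun_prop))
  · exact (Complex.continuous_normSq.comp (continuous_apply 0)).sub
      (Complex.continuous_normSq.comp (continuous_apply 1))

theorem hopfVec_zero (v : Fin 2 → ℂ) :
    hopfVec v 0 = 2 * ((v 0).re * (v 1).re + (v 0).im * (v 1).im) := by
  simp [hopfVec]

theorem hopfVec_one (v : Fin 2 → ℂ) :
    hopfVec v 1 = 2 * ((v 0).re * (v 1).im - (v 0).im * (v 1).re) := by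
  simp [hopfVec, sub_eq_add_neg]

theorem hopfVec_two (v : Fin 2 → ℂ) :
    hopfVec v 2 = Complex.normSq (v 0) - Complex.normSq (v 1) :=
  rfl

theorem norm_sq_eq_sq_add_sq_add_sq (y : EuclideanSpace ℝ (Fin 3)) :
    ‖y‖ ^ 2 = y 0 ^ 2 + y 1 ^ 2 + y 2 ^ 2 := by
  rw [EuclideanSpace.real_norm_sq_eq, Fin.sum_univ_three]

theorem norm_hopfVec (v : Fin 2 → ℂ) :
    ‖hopfVec v‖ = Complex.normSq (v 0) + Complex.normSq (v 1) := by
  have hpos : 0 ≤ Complex.normSq (v 0) + Complex.normSq (v 1) :=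
    add_nonneg (Complex.normSq_nonneg _) (Complex.normSq_nonneg _)
  rw [← sq_eq_sq₀ (norm_nonneg _) hpos, norm_sq_eq_sq_add_sq_add_sq, hopfVec_zero,
    hopfVec_one, hopfVec_two, Complex.normSq_apply, Complex.normSq_apply]
  ring

theorem ofReal_norm_hopfVec (v : Fin 2 → ℂ) : (‖hopfVec v‖ : ℂ) = star v ⬝ᵥ v := by
  simp [norm_hopfVec, dotProduct, Complex.normSq_eq_conj_mul_self]

theorem spinMatrix_hopfVec (v : Fin 2 → ℂ) : spinMatrix (hopfVec v) = vecMulVec v (star v) := by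
  ext i j
  simp only [spinMatrix, norm_hopfVec, hopfVec_zero, hopfVec_one, hopfVec_two]
  fin_cases i <;> fin_cases j <;> apply Complex.ext <;>
    simp [vecMulVec_apply, Complex.normSq_apply] <;> ring

theorem conj_coe_mul_coe (z : Circle) : conj (z : ℂ) * z = 1 := by
  rw [← Complex.normSq_eq_conj_mul_self, Circle.normSq_coe, Complex.ofReal_one]

theorem hopfVec_circle_smul (z : Circle) (v : Fin 2 → ℂ) : hopfVec (z • v) = hopfVec v := by
  have hmul : conj (z * v 0) * (z * v 1) = conj (v 0) * v 1 := by
    rw [map_mul]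
    linear_combination conj (v 0) * v 1 * conj_coe_mul_coe z
  simp only [hopfVec, Circle.smul_def, Pi.smul_apply, smul_eq_mul]
  rw [hmul, Complex.normSq_mul, Complex.normSq_mul, Circle.normSq_coe, one_mul, one_mul]

theorem exists_hopfVec_eq_of_norm_add_pos {y : EuclideanSpace ℝ (Fin 3)} (hy : 0 < ‖y‖ + y 2) :
    ∃ v, hopfVec v = y := by
  have hr : √((‖y‖ + y 2) / 2) ^ 2 = (‖y‖ + y 2) / 2 := Real.sq_sqrt (by linarith)
  have hr0 : √((‖y‖ + y 2) / 2) ≠ 0 := by positivity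
  set r := √((‖y‖ + y 2) / 2)
  refine ⟨![r, ⟨y 0 / (2 * r), y 1 / (2 * r)⟩], PiLp.ext fun i ↦ ?_⟩
  match i with
  | 0 =>
    rw [hopfVec_zero]
    change 2 * (r * (y 0 / (2 * r)) + 0 * (y 1 / (2 * r))) = y 0
    field_simp
    ring
  | 1 =>
    rw [hopfVec_one]
    change 2 * (r * (y 1 / (2 * r)) - 0 * (y 0 / (2 * r))) = y 1
    field_simp
    ring
  | 2 =>
    rw [hopfVec_two, cons_val_zero, cons_val_one, cons_val_zero, Complex.normSq_ofReal,
      Complex.normSq_mk]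
    have hsq : y 0 ^ 2 + y 1 ^ 2 = 2 * r ^ 2 * (‖y‖ - y 2) := by
      rw [hr]
      linear_combination -norm_sq_eq_sq_add_sq_add_sq y
    field_simp
    linear_combination 4 * r ^ 2 * hr - hsq

theorem exists_hopfVec_eq_of_norm_add_eq_zero {y : EuclideanSpace ℝ (Fin 3)}
    (hy : ‖y‖ + y 2 = 0) : ∃ v, hopfVec v = y := by
  have hsq : y 0 ^ 2 + y 1 ^ 2 = 0 := by
    linear_combination (‖y‖ - y 2) * hy - norm_sq_eq_sq_add_sq_add_sq y
  have h0 : y 0 = 0 := pow_eq_zero_iff two_ne_zero |>.1 (by nlinarith [sq_nonneg (y 1)])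
  have h1 : y 1 = 0 := pow_eq_zero_iff two_ne_zero |>.1 (by nlinarith [sq_nonneg (y 0)])
  refine ⟨![0, √‖y‖], PiLp.ext fun i ↦ ?_⟩
  match i with
  | 0 => simp [hopfVec_zero, h0]
  | 1 => simp [hopfVec_one, h1]
  | 2 =>
    rw [hopfVec_two, cons_val_zero, cons_val_one, cons_val_zero, map_zero, Complex.normSq_ofReal,
      Real.mul_self_sqrt (norm_nonneg y)]
    linarith

theorem hopfVec_surjective : Function.Surjective hopfVec := by
  intro y
  have hnonneg : 0 ≤ ‖y‖ + y 2 :=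
    neg_le_iff_add_nonneg'.1 (abs_le.1 (PiLp.norm_apply_le y 2)).1
  rcases hnonneg.eq_or_lt with hzero | hpos
  · exact exists_hopfVec_eq_of_norm_add_eq_zero hzero.symm
  · exact exists_hopfVec_eq_of_norm_add_pos hpos

theorem normSq_star_dotProduct (v w : Fin 2 → ℂ) :
    Complex.normSq (star v ⬝ᵥ w) =
      (‖hopfVec v‖ * ‖hopfVec w‖ + inner ℝ (hopfVec v) (hopfVec w)) / 2 := by
  simp only [norm_hopfVec, PiLp.inner_apply, Fin.sum_univ_three, hopfVec_zero, hopfVec_one,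
    hopfVec_two, dotProduct, Fin.sum_univ_two, Pi.star_apply, RCLike.star_def, RCLike.inner_apply,
    Real.ringHom_apply, Complex.normSq_apply, Complex.add_re, Complex.add_im, Complex.mul_re,
    Complex.mul_im, Complex.conj_re, Complex.conj_im]
  ring

theorem star_dotProduct_ne_zero_of_hopfVec_eq_add {s v w : Fin 2 → ℂ}
    (hs : hopfVec s = hopfVec v + hopfVec w) (hs0 : hopfVec s ≠ 0)
    (hvw : ‖hopfVec v‖ = ‖hopfVec w‖) : star s ⬝ᵥ v ≠ 0 := by
  intro h
  have hv : hopfVec v ≠ 0 := by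
    intro hv
    rw [hv, norm_zero, eq_comm, norm_eq_zero] at hvw
    exact hs0 (by rw [hs, hv, hvw, add_zero])
  have hinner : 0 ≤ inner ℝ (hopfVec s) (hopfVec v) := by
    have hCS := neg_le_of_abs_le (abs_real_inner_le_norm (hopfVec w) (hopfVec v))
    rw [hs, inner_add_left, real_inner_self_eq_norm_sq]
    rw [← hvw, ← sq] at hCS
    linarith
  have hpos : 0 < ‖hopfVec s‖ * ‖hopfVec v‖ := by positivity
  have hzero := normSq_star_dotProduct s v
  rw [h, map_zero] at hzero
  linarith

end Spinors

section SymmetricSquare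

/-- For a projection `P` onto a line `L`, the component in `L ⊗ L` of a tensor `τ`, as a matrix. -/
def compression {n : Type*} [Fintype n] (P : Matrix n n ℂ) (τ : n × n → ℂ) : Matrix n n ℂ :=
  P * of (Function.curry τ) * Pᵀ

variable {n : Type*} [Fintype n]

theorem compression_smul (P : Matrix n n ℂ) (c : ℂ) (τ : n × n → ℂ) :
    compression P (c • τ) = c • compression P τ := by
  have h : of (Function.curry (c • τ)) = c • of (Function.curry τ) := rfl
  rw [compression, h, Matrix.mul_smul, Matrix.smul_mul, compression]

theorem continuous_compression {X : Type*} [TopologicalSpace X] {P : X → Matrix n n ℂ}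
    {τ : X → n × n → ℂ} (hP : Continuous P) (hτ : Continuous τ) :
    Continuous fun x ↦ compression (P x) (τ x) := by
  have hcurry : Continuous fun x ↦ of (Function.curry (τ x)) :=
    continuous_matrix fun i j ↦ (continuous_apply (i, j)).comp hτ
  exact (hP.matrix_mul hcurry).matrix_mul hP.matrix_transpose

theorem compression_vecMulVec (s : n → ℂ) (τ : n × n → ℂ) :
    compression (vecMulVec s (star s)) τ =
      (star s ⬝ᵥ of (Function.curry τ) *ᵥ star s) • vecMulVec s s := by
  rw [compression, transpose_vecMulVec, vecMulVec_mul, vecMulVec_mul_vecMulVec,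
    ← dotProduct_mulVec, vecMulVec_smul]

theorem exists_compression_eq_vecMulVec (s : n → ℂ) (τ : n × n → ℂ) :
    ∃ w, compression (vecMulVec s (star s)) τ = vecMulVec w w := by
  obtain ⟨c, hc⟩ := IsAlgClosed.exists_pow_nat_eq
    (star s ⬝ᵥ of (Function.curry τ) *ᵥ star s) two_pos
  exact ⟨c • s, by rw [compression_vecMulVec, ← hc, smul_vecMulVec, vecMulVec_smul, smul_smul, sq]⟩

theorem compression_symTensor (s a b : n → ℂ) :
    compression (vecMulVec s (star s)) (symTensor a b) =
      (2 * (star s ⬝ᵥ a) * (star s ⬝ᵥ b)) • vecMulVec s s := by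
  have h : of (Function.curry (symTensor a b)) = vecMulVec a b + vecMulVec b a := by
    ext i j
    simp [symTensor, vecMulVec_apply, mul_comm]
  rw [compression_vecMulVec, h, add_mulVec, vecMulVec_mulVec, vecMulVec_mulVec, op_smul_eq_smul,
    op_smul_eq_smul, dotProduct_add, dotProduct_smul, dotProduct_smul, dotProduct_comm a,
    dotProduct_comm b]
  congr 1
  simp only [smul_eq_mul]
  ring

end SymmetricSquare

section Hopf

/-- The unit sphere `S³` of `ℂ²`. -/
abbrev S3 : Type := {v : Fin 2 → ℂ // star v ⬝ᵥ v = 1}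

theorem S3.coe_ne_zero (v : S3) : (v : Fin 2 → ℂ) ≠ 0 := by
  intro h
  simpa [h] using v.2

/-- The rotation action of `S¹` on `S³`, whose orbits are the Hopf circles. -/
instance : SMul Circle S3 where
  smul z v := ⟨z • v, by
    rw [Circle.smul_def, star_smul, smul_dotProduct, dotProduct_smul, v.2, smul_eq_mul, smul_eq_mul,
      mul_one, ← starRingEnd_apply, conj_coe_mul_coe]⟩

theorem S3.coe_smul (z : Circle) (v : S3) :
    ((z • v : S3) : Fin 2 → ℂ) = (z : ℂ) • (v : Fin 2 → ℂ) :=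
  rfl

/-- The Hopf fibration `S³ → S²`. -/
noncomputable def hopf (v : S3) : S2 :=
  ⟨hopfVec v, by
    rw [mem_sphere_zero_iff_norm, ← Complex.ofReal_inj, ofReal_norm_hopfVec, v.2,
      Complex.ofReal_one]⟩

theorem continuous_hopf : Continuous hopf :=
  (continuous_hopfVec.comp continuous_subtype_val).subtype_mk _

theorem hopf_smul (z : Circle) (v : S3) : hopf (z • v) = hopf v :=
  Subtype.ext (hopfVec_circle_smul z v)

theorem hopf_surjective : Function.Surjective hopf := by
  rintro ⟨y, hy⟩
  obtain ⟨v, rfl⟩ := hopfVec_surjective y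
  refine ⟨⟨v, ?_⟩, rfl⟩
  rw [← ofReal_norm_hopfVec, mem_sphere_zero_iff_norm.1 hy, Complex.ofReal_one]

/-- The circles of latitude of `S³` (`z` runs along the circle), shrinking to a point at `θ = 0`
and equal to a Hopf circle at `θ = π / 2`. -/
noncomputable def latitude (θ : ℝ) (z : Circle) : S3 :=
  ⟨![Real.sin θ * z, Real.cos θ], by
    have h : (Real.sin θ : ℂ) ^ 2 + Real.cos θ ^ 2 = 1 := mod_cast Real.sin_sq_add_cos_sq θ
    simp only [dotProduct, Fin.sum_univ_two, Pi.star_apply, cons_val_zero, cons_val_one,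
      cons_val_fin_one, RCLike.star_def, map_mul, Complex.conj_ofReal]
    linear_combination h + (Real.sin θ : ℂ) ^ 2 * conj_coe_mul_coe z⟩

theorem continuous_latitude : Continuous fun q : ℝ × Circle ↦ latitude q.1 q.2 := by
  refine Continuous.subtype_mk (continuous_pi fun i ↦ ?_) _
  fin_cases i
  · change Continuous fun q : ℝ × Circle ↦ (Real.sin q.1 * q.2 : ℂ)
    fun_prop
  · change Continuous fun q : ℝ × Circle ↦ (Real.cos q.1 : ℂ)
    fun_prop

theorem latitude_zero (z : Circle) : latitude 0 z = latitude 0 1 := by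
  simp [latitude]

theorem latitude_pi_div_two (z : Circle) :
    latitude (Real.pi / 2) z = z • latitude (Real.pi / 2) 1 := by
  ext i
  fin_cases i <;> simp [latitude, S3.coe_smul]

theorem not_exists_equivariant_vecMulVec {n : Type*} [Finite n] :
    ¬ ∃ R : S3 → Matrix n n ℂ, Continuous R ∧ (∀ v, R v ≠ 0) ∧ (∀ v, ∃ w, R v = vecMulVec w w) ∧
      ∀ (z : Circle) v, R (z • v) = (z : ℂ) • R v := by
  rintro ⟨R, hR, hne, hroot, hequiv⟩
  have hend : HasContinuousRoot fun z ↦ R (latitude (Real.pi / 2) z) := by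
    refine (hasContinuousRoot_iff_of_preconnectedSpace (T := ℝ) (R := fun θ z ↦ R (latitude θ z))
      (hR.comp continuous_latitude) (fun _ _ ↦ hne _) (fun _ _ ↦ hroot _) 0 (Real.pi / 2)).1 ?_
    obtain ⟨w, hw⟩ := hroot (latitude 0 1)
    simpa only [latitude_zero, hw] using hasContinuousRoot_const w
  refine not_hasContinuousRoot_circle_smul (hne (latitude (Real.pi / 2) 1)) ?_
  simpa only [← hequiv, ← latitude_pi_div_two] using hend

end Hopf

section Pairs

/-- The orthogonal projection onto the line of `symTensor a b`, for lines of spinors `ℂ a`, `ℂ b`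
over the points of a pair. This is the identification of `Sym2 S²` with the projective plane of
`Sym² ℂ²`, a line being encoded by its projection. -/
noncomputable def pairProj (e : Sym2 S2) : Matrix (Fin 2 × Fin 2) (Fin 2 × Fin 2) ℂ :=
  e.lift ⟨fun p q : S2 ↦ (symKronecker (spinMatrix p) (spinMatrix q)).trace⁻¹ •
    symKronecker (spinMatrix p) (spinMatrix q), fun p q ↦ by
      beta_reduce
      rw [symKronecker_comm]⟩

theorem symKronecker_spinMatrix_hopf (v w : S3) :
    symKronecker (spinMatrix (hopf v)) (spinMatrix (hopf w)) =
      vecMulVec (symTensor v.1 w) (star (symTensor v.1 w)) := by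
  rw [hopf, hopf, spinMatrix_hopfVec, spinMatrix_hopfVec, symKronecker_vecMulVec_star]

theorem trace_symKronecker_spinMatrix_hopf_ne_zero (v w : S3) :
    (symKronecker (spinMatrix (hopf v)) (spinMatrix (hopf w))).trace ≠ 0 := by
  rw [symKronecker_spinMatrix_hopf, trace_vecMulVec, Ne, dotProduct_self_star_eq_zero]
  exact symTensor_ne_zero v.coe_ne_zero w.coe_ne_zero

theorem pairProj_mk_hopf (v w : S3) :
    pairProj s(hopf v, hopf w) = lineProj (symTensor v.1 w) := by
  change (symKronecker (spinMatrix (hopf v)) (spinMatrix (hopf w))).trace⁻¹ •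
    symKronecker (spinMatrix (hopf v)) (spinMatrix (hopf w)) = _
  rw [symKronecker_spinMatrix_hopf, trace_vecMulVec, dotProduct_comm, lineProj]

theorem exists_eq_mk_hopf (e : Sym2 S2) : ∃ v w : S3, e = s(hopf v, hopf w) := by
  induction e with | _ p q
  obtain ⟨v, rfl⟩ := hopf_surjective p
  obtain ⟨w, rfl⟩ := hopf_surjective q
  exact ⟨v, w, rfl⟩

theorem isIdempotentElem_pairProj (e : Sym2 S2) : IsIdempotentElem (pairProj e) := by
  obtain ⟨v, w, rfl⟩ := exists_eq_mk_hopf e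
  rw [pairProj_mk_hopf]
  exact isIdempotentElem_lineProj _

theorem continuous_pairProj : Continuous pairProj := by
  refine continuous_coinduced_dom.2 ?_
  have hkron : Continuous fun x : S2 × S2 ↦ symKronecker (spinMatrix x.1) (spinMatrix x.2) :=
    continuous_symKronecker (continuous_spinMatrix.comp (by fun_prop))
      (continuous_spinMatrix.comp (by fun_prop))
  refine (hkron.matrix_trace.inv₀ fun ⟨p, q⟩ ↦ ?_).smul hkron
  obtain ⟨v, rfl⟩ := hopf_surjective p
  obtain ⟨w, rfl⟩ := hopf_surjective q
  exact trace_symKronecker_spinMatrix_hopf_ne_zero v w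

/-- The sum `p + q` in `ℝ³` of the points of a pair, vanishing on antipodal pairs only. -/
noncomputable def pairSum (e : Sym2 S2) : EuclideanSpace ℝ (Fin 3) :=
  e.lift ⟨fun p q : S2 ↦ p + q, fun _ _ ↦ add_comm _ _⟩

theorem continuous_pairSum : Continuous pairSum := by
  refine continuous_coinduced_dom.2 ?_
  change Continuous fun x : S2 × S2 ↦ (x.1 + x.2 : EuclideanSpace ℝ (Fin 3))
  fun_prop

theorem exists_eq_mk_neg_of_pairSum_eq_zero {e : Sym2 S2} (he : pairSum e = 0) :
    ∃ p : S2, e = s(p, -p) := by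
  induction e with | _ p q
  have hq : q = -p := Subtype.ext (eq_neg_of_add_eq_zero_right he)
  exact ⟨p, by rw [hq]⟩

theorem compression_ne_zero {e : Sym2 S2} (he : pairSum e ≠ 0) {τ : Fin 2 × Fin 2 → ℂ} (hτ : τ ≠ 0)
    (hfix : pairProj e *ᵥ τ = τ) : compression (spinMatrix (pairSum e)) τ ≠ 0 := by
  obtain ⟨v, w, rfl⟩ := exists_eq_mk_hopf e
  obtain ⟨s, hs⟩ := hopfVec_surjective (pairSum s(hopf v, hopf w))
  have hsum : hopfVec s = hopfVec v + hopfVec w := hs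
  have hnorm : ‖hopfVec v‖ = ‖hopfVec w‖ := (norm_eq_of_mem_sphere (hopf v)).trans
    (norm_eq_of_mem_sphere (hopf w)).symm
  have hs0 : s ≠ 0 := by
    rintro rfl
    exact he (by rw [← hs, ← norm_eq_zero, norm_hopfVec]; simp)
  rw [← hs] at he ⊢
  rw [pairProj_mk_hopf, lineProj_mulVec] at hfix
  rw [← hfix] at hτ ⊢
  rw [spinMatrix_hopfVec, compression_smul, compression_symTensor]
  refine smul_ne_zero (left_ne_zero_of_smul hτ)
    (smul_ne_zero (mul_ne_zero (mul_ne_zero two_ne_zero ?_) ?_) (vecMulVec_ne_zero hs0 hs0))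
  · exact star_dotProduct_ne_zero_of_hopfVec_eq_add hsum he hnorm
  · exact star_dotProduct_ne_zero_of_hopfVec_eq_add (hsum.trans (add_comm _ _)) he hnorm.symm

end Pairs

section EquivariantLifts

/-- The map `f`, viewed as a map to the projective plane of `Sym² ℂ²`, lifts along the Hopf
fibration to an `S¹`-equivariant map to `Sym² ℂ² \ {0}`. In terms of line bundles on `S²`, the
pullback of the tautological bundle along `f` is the tautological bundle of `S² = ℙ¹`. -/
def HasEquivariantLift (f : C(S2, Sym2 S2)) : Prop :=
  ∃ τ : S3 → Fin 2 × Fin 2 → ℂ, Continuous τ ∧ (∀ v, τ v ≠ 0) ∧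
    (∀ v, pairProj (f (hopf v)) *ᵥ τ v = τ v) ∧ ∀ (z : Circle) v, τ (z • v) = (z : ℂ) • τ v

theorem hasEquivariantLift_of_forall_eq_mk {f : C(S2, Sym2 S2)} {x₀ : S2}
    (hf : ∀ x, f x = s(x, x₀)) : HasEquivariantLift f := by
  obtain ⟨u, rfl⟩ := hopf_surjective x₀
  refine ⟨fun v ↦ symTensor v u, ?_, fun v ↦ symTensor_ne_zero v.coe_ne_zero u.coe_ne_zero,
    fun v ↦ ?_, fun z v ↦ symTensor_smul_left (z : ℂ) v.1 u⟩
  · have hcoord (i : Fin 2) : Continuous fun v : S3 ↦ v.1 i :=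
      (continuous_apply i).comp continuous_subtype_val
    exact continuous_pi fun i ↦ ((hcoord i.1).mul_const _).add ((hcoord i.2).mul_const _)
  · rw [hf, pairProj_mk_hopf, lineProj_mulVec_self]

open scoped Matrix.Norms.L2Operator in
theorem HasEquivariantLift.of_homotopic {f g : C(S2, Sym2 S2)} (hf : HasEquivariantLift f)
    (hfg : f.Homotopic g) : HasEquivariantLift g := by
  obtain ⟨τ, hτ, hne, hfix, hequiv⟩ := hf
  obtain ⟨u, hu⟩ := isConj_comp_of_homotopic hfg ⟨pairProj, continuous_pairProj⟩
    isIdempotentElem_pairProj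
  have hconj (x : S2) : u.1 x * pairProj (f x) = pairProj (g x) * u.1 x :=
    DFunLike.congr_fun hu.eq x
  have hinv (x : S2) : (↑u⁻¹ : C(S2, Matrix (Fin 2 × Fin 2) (Fin 2 × Fin 2) ℂ)) x * u.1 x = 1 :=
    DFunLike.congr_fun u.inv_mul x
  refine ⟨fun v ↦ u.1 (hopf v) *ᵥ τ v, (u.1.continuous.comp continuous_hopf).matrix_mulVec hτ,
    fun v h ↦ hne v ?_, fun v ↦ ?_, fun z v ↦ ?_⟩
  · rw [← one_mulVec (τ v), ← hinv (hopf v), ← mulVec_mulVec]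
    exact (congrArg _ h).trans (mulVec_zero _)
  · rw [mulVec_mulVec, ← hconj, ← mulVec_mulVec, hfix]
  · beta_reduce
    rw [hopf_smul, hequiv, mulVec_smul]

theorem HasEquivariantLift.exists_pairSum_eq_zero {f : C(S2, Sym2 S2)}
    (hf : HasEquivariantLift f) : ∃ x, pairSum (f x) = 0 := by
  by_contra! hsum
  obtain ⟨τ, hτ, hne, hfix, hequiv⟩ := hf
  refine not_exists_equivariant_vecMulVec
    ⟨fun v ↦ compression (spinMatrix (pairSum (f (hopf v)))) (τ v), ?_, fun v ↦ ?_, fun v ↦ ?_,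
      fun z v ↦ ?_⟩
  · exact continuous_compression (continuous_spinMatrix.comp
      (continuous_pairSum.comp (f.continuous.comp continuous_hopf))) hτ
  · exact compression_ne_zero (hsum _) (hne v) (hfix v)
  · obtain ⟨s, hs⟩ := hopfVec_surjective (pairSum (f (hopf v)))
    simpa only [← hs, spinMatrix_hopfVec] using exists_compression_eq_vecMulVec s (τ v)
  · beta_reduce
    rw [hopf_smul, hequiv, compression_smul]

end EquivariantLifts

end EquivariantLift

/-- Every continuous map `φ : S² → Sym2 S²` homotopic to `Φ₀ : x ↦ ⟦(x, x₀)⟧` passes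
through a pair of antipodal points. -/
theorem stmt_10 (x₀ : S2) (Φ₀ φ : C(S2, Sym2 S2)) (hΦ₀ : ∀ x, Φ₀ x = s(x, x₀))
    (hφ : φ.Homotopic Φ₀) : ∃ x p : S2, φ x = s(p, -p) := by
  have hΦ₀_lift : EquivariantLift.HasEquivariantLift Φ₀ :=
    EquivariantLift.hasEquivariantLift_of_forall_eq_mk hΦ₀
  have hφ_lift : EquivariantLift.HasEquivariantLift φ := hΦ₀_lift.of_homotopic hφ.symm
  obtain ⟨x, hx⟩ := hφ_lift.exists_pairSum_eq_zero
  exact ⟨x, EquivariantLift.exists_eq_mk_neg_of_pairSum_eq_zero hx⟩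
end
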